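/- A finite set $\mathcal H$ of integers is called admissible if for every prime $p$ one has $\#\{n \bmod p : \prod_{h\in\mathcal H}(n+h)\equiv 0 \pmod p\}<p$; an admissible $k$-tuple is an admissible set of $k$ distinct integers. Let $\varphi$ be Euler's totient function and $\log$ the natural logarithm. Fix a positive integer $k$, a squarefree positive integer $q$, integers $0<r_1\le r_2\le\cdots\le r_k$ all coprime to $q$, and constants $C>0$ and $\delta>0$. Then there is a number $y'$, depending only on $q,r_1,\dots,r_k,k,C,\delta$, such that the following holds. Let $x,y,z$ be real numbers with $x\ge 1$, $y\ge y'$, $z\ge(1+\delta)y$ and $$2y\bigl(1+(1+r_k)x\bigr)\le\frac{2q}{\varphi(q)}\,z\le y\,\frac{\log\log y}{\log\log\log y}.$$ Let $\mathcal Z$ be any (possibly empty) set of primes such that every $p'\in\mathcal Z$ satisfies $\sum_{p\in\mathcal Z,\,p\ge p'}\frac1p\le\frac{C}{p'}$ and $p'\ge\frac{\log z}{C}$. Then there exist a set of integers $\{\tilde a_p : p\le y \text{ prime},\ p\notin\mathcal Z\}$ and an admissible $k$-tuple $\{h_1,\dots,h_k\}\subseteq(y,z]$ such that: (i) $\{h_1,\dots,h_k\}=\bigl((0,z]\cap\mathbb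 Z\bigr)\setminus\bigcup_{p\le y,\ p\notin\mathcal Z}\{g\in\mathbb Z: g\equiv\tilde a_p \pmod p\}$, the union being over primes $p$; (ii) for every prime $p$, $p\mid q$ implies $p\mid\tilde a_p$; (iii) for all $1\le i<j\le k$, every prime $p$ dividing $h_i-h_j$ satisfies $p\le y$; (iv) $h_i\equiv r_i\pmod q$ for all $1\le i\le k$. -/

import Mathlib

/-- A finite set of integers `H` is admissible if for every prime `p`, the residues `n mod p`
with `∏_{h ∈ H} (n + h) ≡ 0 (mod p)` do not cover all of `ℤ/pℤ`. -/
def AdmissibleSet (H : Finset ℤ) : Prop :=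
  ∀ p : ℕ, p.Prime → {n : ZMod p | ∏ h ∈ H, (n + (h : ZMod p)) = 0}.ncard < p

/-- A finite partial sum over smooth numbers is at most the Euler product. -/
theorem sum_le_prod_primesBelow_of_subset_smoothNumbers {f : ℕ →* ℝ} (hf : ∀ n, 0 ≤ f n)
    (hlt : ∀ p : ℕ, p.Prime → f p < 1) {N : ℕ} {F : Finset ℕ} (hF : ∀ n ∈ F, n ∈ N.smoothNumbers) :
    ∑ n ∈ F, f n ≤ ∏ p ∈ N.primesBelow, (1 - f p)⁻¹ := by
  have h := (EulerProduct.summable_and_hasSum_smoothNumbers_prod_primesBelow_geometric (f := f)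
    (fun {p} hp => by rw [Real.norm_of_nonneg (hf p)]; exact hlt p hp) N).2
  have h2 : HasSum ((N.smoothNumbers).indicator f) (∏ p ∈ N.primesBelow, (1 - f p)⁻¹) :=
    hasSum_subtype_iff_indicator.mp h
  calc ∑ n ∈ F, f n = ∑ n ∈ F, (N.smoothNumbers).indicator f n :=
        Finset.sum_congr rfl fun n hn => (Set.indicator_of_mem (hF n hn) _).symm
    _ ≤ _ := sum_le_hasSum F (fun n _ => Set.indicator_nonneg (fun m _ => hf m) n) h2

theorem sum_inv_primesBelow_six_mul_le (M : ℕ) :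
    ∑ p ∈ (6 * (M + 1)).primesBelow, (1 : ℝ) / p ≤ 31 / 30 + 1 / 3 * (harmonic M : ℝ) := by
  induction M with
  | zero =>
    have : (6 * (0 + 1)).primesBelow = {2, 3, 5} := by decide
    rw [this]
    norm_num
  | succ M ih =>
    have hsub : (6 * (M + 1 + 1)).primesBelow ⊆
        (6 * (M + 1)).primesBelow ∪ {6 * (M + 1) + 1, 6 * (M + 1) + 5} := by
      intro p hp
      rw [Nat.mem_primesBelow] at hp
      simp only [Finset.mem_union, Nat.mem_primesBelow, Finset.mem_insert, Finset.mem_singleton]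
      by_cases hlt : p < 6 * (M + 1)
      · exact Or.inl ⟨hlt, hp.2⟩
      · right
        have h2 : ¬ 2 ∣ p := fun h => by
          have := (Nat.prime_dvd_prime_iff_eq Nat.prime_two hp.2).mp h
          omega
        have h3 : ¬ 3 ∣ p := fun h => by
          have := (Nat.prime_dvd_prime_iff_eq Nat.prime_three hp.2).mp h
          omega
        omega
    have hne : 6 * (M + 1) + 1 ≠ 6 * (M + 1) + 5 := by omega
    calc _ ≤ ∑ p ∈ (6 * (M + 1)).primesBelow ∪ {6 * (M + 1) + 1, 6 * (M + 1) + 5}, (1 : ℝ) / p :=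
          Finset.sum_le_sum_of_subset_of_nonneg hsub (fun _ _ _ => by positivity)
      _ ≤ ∑ p ∈ (6 * (M + 1)).primesBelow, (1 : ℝ) / p +
            ∑ p ∈ ({6 * (M + 1) + 1, 6 * (M + 1) + 5} : Finset ℕ), (1 : ℝ) / p := by
          rw [← Finset.sum_union_inter]
          exact le_add_of_nonneg_right (Finset.sum_nonneg fun _ _ => by positivity)
      _ ≤ (31 / 30 + 1 / 3 * (harmonic M : ℝ)) + 1 / 3 * (1 / ((M : ℝ) + 1)) := by
          refine add_le_add ih ?_
          rw [Finset.sum_pair hne]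
          push_cast
          have h1 : (1 : ℝ) / (6 * (M + 1) + 1) ≤ 1 / (6 * (M + 1)) := by gcongr; linarith
          have h2 : (1 : ℝ) / (6 * (M + 1) + 5) ≤ 1 / (6 * (M + 1)) := by gcongr; linarith
          have h3 : (1 : ℝ) / (6 * (M + 1)) = 1 / 6 * (1 / ((M : ℝ) + 1)) := by field_simp
          linarith
      _ = _ := by
          rw [harmonic_succ]
          push_cast
          ring

theorem sum_inv_primesBelow_le (N : ℕ) :
    ∑ p ∈ N.primesBelow, (1 : ℝ) / p ≤ 2 + 1 / 3 * Real.log N := by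
  have hsub : N.primesBelow ⊆ (6 * (N / 6 + 1)).primesBelow := by
    intro p hp
    rw [Nat.mem_primesBelow] at hp ⊢
    exact ⟨by omega, hp.2⟩
  have h1 : ∑ p ∈ N.primesBelow, (1 : ℝ) / p ≤
      ∑ p ∈ (6 * (N / 6 + 1)).primesBelow, (1 : ℝ) / p :=
    Finset.sum_le_sum_of_subset_of_nonneg hsub (fun _ _ _ => by positivity)
  have h2 := sum_inv_primesBelow_six_mul_le (N / 6)
  have h3 := harmonic_le_one_add_log (N / 6)
  have h4 : Real.log ((N / 6 : ℕ) : ℝ) ≤ Real.log N := by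
    rcases Nat.eq_zero_or_pos (N / 6) with h | h
    · rw [h]
      simpa using Real.log_natCast_nonneg N
    · exact Real.log_le_log (by exact_mod_cast h) (by exact_mod_cast Nat.div_le_self N 6)
  linarith

theorem sum_inv_mul_pred_primesBelow_le (N : ℕ) :
    ∑ p ∈ N.primesBelow, (1 : ℝ) / (p * (p - 1)) ≤ 1 := by
  have key : ∀ n : ℕ, ∑ m ∈ Finset.range n, (1 : ℝ) / ((m + 2 : ℝ) * (m + 1)) = 1 - 1 / (n + 1) := by
    intro n
    induction n with
    | zero => simp
    | succ n ih =>
      rw [Finset.sum_range_succ, ih]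
      push_cast
      field_simp
      ring
  have hsub : N.primesBelow ⊆ (Finset.range N).image (· + 2) := by
    intro p hp
    rw [Nat.mem_primesBelow] at hp
    have := hp.2.two_le
    exact Finset.mem_image.mpr ⟨p - 2, Finset.mem_range.mpr (by omega), by omega⟩
  calc _ ≤ ∑ p ∈ (Finset.range N).image (fun m : ℕ => m + 2), (1 : ℝ) / ((p : ℕ) * ((p : ℕ) - 1)) := by
        refine Finset.sum_le_sum_of_subset_of_nonneg hsub fun p hp _ => ?_
        obtain ⟨m, -, rfl⟩ := Finset.mem_image.mp hp
        push_cast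
        have : (0 : ℝ) ≤ (m : ℝ) + 2 - 1 := by linarith [Nat.cast_nonneg (α := ℝ) m]
        positivity
    _ = ∑ m ∈ Finset.range N, (1 : ℝ) / ((m + 2 : ℝ) * (m + 1)) := by
        rw [Finset.sum_image (fun a _ b _ h => Nat.add_right_cancel h)]
        refine Finset.sum_congr rfl fun m _ => ?_
        push_cast
        congr 2
        ring
    _ ≤ 1 := by
        rw [key]
        have : (0 : ℝ) ≤ 1 / ((N : ℝ) + 1) := by positivity
        linarith

theorem log_log_le_sum_inv_primesBelow {N : ℕ} (hN : 2 ≤ N) :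
    Real.log (Real.log N) - 1 ≤ ∑ p ∈ N.primesBelow, (1 : ℝ) / p := by
  let f : ℕ →* ℝ :=
    { toFun := fun n => (n : ℝ)⁻¹
      map_one' := by simp
      map_mul' := fun m n => by push_cast; rw [mul_inv] }
  have hf : ∀ n, f n = (n : ℝ)⁻¹ := fun n => rfl
  have hlogpos : 0 < Real.log N := Real.log_pos (by exact_mod_cast hN)
  have h1 : ∑ n ∈ Finset.Icc 1 (N - 1), f n ≤ ∏ p ∈ N.primesBelow, (1 - f p)⁻¹ := by
    refine sum_le_prod_primesBelow_of_subset_smoothNumbers (fun n => by rw [hf]; positivity)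
      (fun p hp => ?_) (fun n hn => ?_)
    · rw [hf]
      exact inv_lt_one_of_one_lt₀ (by exact_mod_cast hp.one_lt)
    · rw [Finset.mem_Icc] at hn
      exact Nat.mem_smoothNumbers_of_lt (by omega) (by omega)
  have h2 : Real.log N ≤ ∑ n ∈ Finset.Icc 1 (N - 1), f n := by
    have := log_add_one_le_harmonic (N - 1)
    rw [harmonic_eq_sum_Icc] at this
    rw [show N - 1 + 1 = N by omega] at this
    refine this.trans (le_of_eq ?_)
    push_cast
    rfl
  have h3 : ∏ p ∈ N.primesBelow, (1 - f p)⁻¹ ≤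
      Real.exp (∑ p ∈ N.primesBelow, ((1 : ℝ) / p + 1 / (p * (p - 1)))) := by
    rw [Real.exp_sum]
    refine Finset.prod_le_prod (fun p hp => ?_) (fun p hp => ?_)
    · have h := (Nat.mem_primesBelow.mp hp).2.one_lt
      rw [hf]
      have : (p : ℝ)⁻¹ < 1 := inv_lt_one_of_one_lt₀ (by exact_mod_cast h)
      exact inv_nonneg.mpr (by linarith)
    · have h := (Nat.mem_primesBelow.mp hp).2.one_lt
      have h' : (1 : ℝ) < p := by exact_mod_cast h
      have h0 : (p : ℝ) ≠ 0 := by linarith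
      have h0' : (p : ℝ) - 1 ≠ 0 := by linarith
      have e1 : (1 - f p)⁻¹ = 1 / ((p : ℝ) - 1) + 1 := by
        rw [hf]
        field_simp
        ring
      have e2 : (1 : ℝ) / p + 1 / (p * (p - 1)) = 1 / ((p : ℝ) - 1) := by
        field_simp
        ring
      rw [e1, e2]
      exact Real.add_one_le_exp _
  have h4 := h2.trans (h1.trans h3)
  have h5 := Real.log_le_log hlogpos h4
  rw [Real.log_exp, Finset.sum_add_distrib] at h5
  linarith [sum_inv_mul_pred_primesBelow_le N]

/-- Rankin's bound for the number of `N`-smooth numbers up to `X`. -/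
theorem card_smoothNumbers_le_rankin {N : ℕ} (hN : 2 ≤ Real.log N) {X : ℝ} (hX : 1 ≤ X)
    {F : Finset ℕ} (hF : ∀ n ∈ F, n ∈ N.smoothNumbers ∧ (n : ℝ) ≤ X) :
    (F.card : ℝ) ≤ X * Real.exp (12 * (1 + Real.log N) - Real.log X / Real.log N) := by
  set l := Real.log N with hl
  have hl0 : 0 < l := by linarith
  have hNpos : 0 < N := Nat.pos_of_ne_zero fun h => by
    rw [h] at hl
    simp at hl
    linarith
  have hNpos' : (0 : ℝ) < N := by exact_mod_cast hNpos
  set σ : ℝ := 1 - 1 / l with hσ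
  have hinv : 1 / l ≤ 1 / 2 := one_div_le_one_div_of_le two_pos hN
  have hinv0 : 0 < 1 / l := by positivity
  have hσ1 : 1 / 2 ≤ σ := by linarith
  let f : ℕ →* ℝ :=
    { toFun := fun n => (n : ℝ) ^ (-σ)
      map_one' := by simp
      map_mul' := fun m n => by
        push_cast
        exact Real.mul_rpow (Nat.cast_nonneg _) (Nat.cast_nonneg _) }
  have hf : ∀ n, f n = (n : ℝ) ^ (-σ) := fun n => rfl
  have hf0 : ∀ n, 0 ≤ f n := fun n => by rw [hf]; positivity
  have hfp : ∀ p : ℕ, p.Prime → f p ≤ 3 / 4 := by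
    intro p hp
    have h2 : (2 : ℝ) ≤ p := by exact_mod_cast hp.two_le
    rw [hf]
    calc (p : ℝ) ^ (-σ) ≤ (2 : ℝ) ^ (-σ) :=
          Real.rpow_le_rpow_of_nonpos two_pos h2 (by linarith)
      _ ≤ (2 : ℝ) ^ (-(1 / 2 : ℝ)) := Real.rpow_le_rpow_of_exponent_le one_le_two (by linarith)
      _ = (√2)⁻¹ := by rw [Real.rpow_neg two_pos.le, Real.sqrt_eq_rpow]
      _ ≤ 3 / 4 := by
          rw [inv_le_comm₀ (by positivity) (by norm_num)]
          exact Real.le_sqrt_of_sq_le (by norm_num)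
  have h1 : ∑ n ∈ F, f n ≤ ∏ p ∈ N.primesBelow, (1 - f p)⁻¹ :=
    sum_le_prod_primesBelow_of_subset_smoothNumbers hf0
      (fun p hp => (hfp p hp).trans_lt (by norm_num)) (fun n hn => (hF n hn).1)
  have h2 : (F.card : ℝ) ≤ X ^ σ * ∑ n ∈ F, f n := by
    rw [Finset.mul_sum, Finset.cast_card]
    refine Finset.sum_le_sum fun n hn => ?_
    have hn0 : 0 < (n : ℝ) := by
      exact_mod_cast Nat.pos_of_ne_zero (Nat.ne_zero_of_mem_smoothNumbers (hF n hn).1)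
    rw [hf, Real.rpow_neg hn0.le, ← div_eq_mul_inv, one_le_div (by positivity)]
    exact Real.rpow_le_rpow hn0.le (hF n hn).2 (by linarith)
  have h3 : ∏ p ∈ N.primesBelow, (1 - f p)⁻¹ ≤ Real.exp (∑ p ∈ N.primesBelow, 4 * f p) := by
    rw [Real.exp_sum]
    refine Finset.prod_le_prod (fun p hp => ?_) (fun p hp => ?_)
    · exact inv_nonneg.mpr (by linarith [hfp p (Nat.mem_primesBelow.mp hp).2])
    · have ht := hfp p (Nat.mem_primesBelow.mp hp).2
      have ht0 := hf0 p
      have hpos : 0 < 1 - f p := by linarith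
      refine le_trans ?_ (Real.add_one_le_exp _)
      rw [inv_le_iff_one_le_mul₀ hpos]
      nlinarith
  have h4 : ∑ p ∈ N.primesBelow, 4 * f p ≤ 12 * (1 + l) := by
    have hb : ∀ n ∈ Finset.Icc 1 N, f n ≤ 3 * (n : ℝ)⁻¹ := by
      intro n hn
      rw [Finset.mem_Icc] at hn
      have hn0 : (0 : ℝ) < n := by exact_mod_cast hn.1
      have : f n = (n : ℝ) ^ (1 / l) * (n : ℝ)⁻¹ := by
        rw [hf, ← Real.rpow_neg_one, ← Real.rpow_add hn0]
        congr 1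
        rw [hσ]
        ring
      rw [this]
      refine mul_le_mul_of_nonneg_right ?_ (by positivity)
      calc (n : ℝ) ^ (1 / l) ≤ (N : ℝ) ^ (1 / l) :=
            Real.rpow_le_rpow hn0.le (by exact_mod_cast hn.2) hinv0.le
        _ = Real.exp 1 := by
            rw [Real.rpow_def_of_pos hNpos', ← hl, mul_one_div_cancel hl0.ne']
        _ ≤ 3 := by linarith [Real.exp_one_lt_d9]
    have hsub : N.primesBelow ⊆ Finset.Icc 1 N := by
      intro p hp
      rw [Nat.mem_primesBelow] at hp
      exact Finset.mem_Icc.mpr ⟨hp.2.one_le, hp.1.le⟩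
    have hh := harmonic_le_one_add_log N
    rw [harmonic_eq_sum_Icc] at hh
    push_cast at hh
    rw [← Finset.mul_sum]
    calc 4 * ∑ p ∈ N.primesBelow, f p ≤ 4 * ∑ p ∈ Finset.Icc 1 N, f p := by
          gcongr
          exact fun _ _ _ => hf0 _
      _ ≤ 4 * ∑ p ∈ Finset.Icc 1 N, 3 * (p : ℝ)⁻¹ := by
          gcongr with n hn
          exact hb n hn
      _ ≤ _ := by
          rw [← Finset.mul_sum]
          linarith
  have hX0 : 0 < X := by linarith
  calc (F.card : ℝ) ≤ X ^ σ * Real.exp (12 * (1 + l)) := by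
        refine h2.trans (mul_le_mul_of_nonneg_left ?_ (by positivity))
        exact h1.trans (h3.trans (Real.exp_le_exp.mpr h4))
    _ = _ := by
        rw [Real.rpow_def_of_pos hX0]
        nth_rewrite 2 [← Real.exp_log hX0]
        rw [← Real.exp_add, ← Real.exp_add]
        congr 1
        rw [hσ]
        ring

/-- Averaging over the residue classes modulo `p` that avoid all `h i`: some class carries at
least its share of the weight of the elements not congruent to any `h i`. -/
theorem exists_class_sum_le {k p : ℕ} (hkp : k < p) (h : Fin k → ℤ) (S : Finset ℤ)
    (u : ℤ → ℝ) (hu : ∀ g, 0 ≤ u g) :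
    ∃ a : ℤ, (∀ i, ¬ (p : ℤ) ∣ h i - a) ∧
      ∑ g ∈ S with ¬ (p : ℤ) ∣ g - a, u g ≤
        ∑ g ∈ S, u g * (if ∃ i, (p : ℤ) ∣ g - h i then 1 else 1 - 1 / (p : ℝ)) := by
  classical
  have : NeZero p := ⟨by omega⟩
  have hp0 : (0 : ℝ) < p := by exact_mod_cast (by omega : 0 < p)
  set B : Finset (ZMod p) := Finset.univ.image fun i => (h i : ZMod p) with hB
  have hcard : B.card < (Finset.univ : Finset (ZMod p)).card := by
    rw [Finset.card_univ, ZMod.card]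
    exact (Finset.card_image_le.trans (by simp)).trans_lt hkp
  have hne : Bᶜ.Nonempty := by
    obtain ⟨b, -, hb⟩ := Finset.exists_mem_notMem_of_card_lt_card hcard
    exact ⟨b, Finset.mem_compl.mpr hb⟩
  have hBc : (Bᶜ.card : ℝ) ≤ p := by
    have := Finset.card_le_univ Bᶜ
    rw [ZMod.card] at this
    exact_mod_cast this
  set T : Finset ℤ := {g ∈ S | (g : ZMod p) ∉ B} with hT
  have hsum : ∑ b ∈ Bᶜ, ∑ g ∈ T with ((g : ℤ) : ZMod p) = b, u g = ∑ g ∈ T, u g :=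
    Finset.sum_fiberwise_of_maps_to (fun g hg => Finset.mem_compl.mpr (Finset.mem_filter.mp hg).2) u
  have hT0 : 0 ≤ ∑ g ∈ T, u g := Finset.sum_nonneg fun g _ => hu g
  obtain ⟨b, hb, hble⟩ : ∃ b ∈ Bᶜ, 1 / (p : ℝ) * ∑ g ∈ T, u g ≤
      ∑ g ∈ T with ((g : ℤ) : ZMod p) = b, u g := by
    apply Finset.exists_le_of_sum_le hne
    rw [hsum, Finset.sum_const, nsmul_eq_mul, ← mul_assoc]
    calc _ ≤ 1 * ∑ g ∈ T, u g := by
          gcongr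
          rw [mul_one_div, div_le_one hp0]
          exact hBc
      _ = _ := one_mul _
  have hdvd : ∀ g a : ℤ, (p : ℤ) ∣ g - a ↔ (g : ZMod p) = (a : ZMod p) := fun g a => by
    rw [← ZMod.intCast_zmod_eq_zero_iff_dvd, Int.cast_sub, sub_eq_zero]
  obtain ⟨a, rfl⟩ := ZMod.intCast_surjective b
  have hbad : ∀ g : ℤ, (∃ i, (p : ℤ) ∣ g - h i) ↔ (g : ZMod p) ∈ B := fun g => by
    simp only [hdvd, hB, Finset.mem_image, Finset.mem_univ, true_and, eq_comm]
  refine ⟨a, fun i hi => Finset.mem_compl.mp hb ?_, ?_⟩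
  · exact Finset.mem_image.mpr ⟨i, Finset.mem_univ _, (hdvd _ _).mp hi⟩
  · have e1 : ∑ g ∈ S with ¬ (p : ℤ) ∣ g - a, u g =
        ∑ g ∈ S, u g - ∑ g ∈ S with (p : ℤ) ∣ g - a, u g := by
      rw [← Finset.sum_filter_add_sum_filter_not S (fun g => (p : ℤ) ∣ g - a) u]
      ring
    have e2 : ∑ g ∈ S with (p : ℤ) ∣ g - a, u g = ∑ g ∈ T with ((g : ℤ) : ZMod p) = (a : ZMod p), u g := by
      refine Finset.sum_congr ?_ fun _ _ => rfl
      ext g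
      simp only [hT, Finset.mem_filter, hdvd]
      constructor
      · rintro ⟨h1, h2⟩
        exact ⟨⟨h1, by rw [h2]; exact Finset.mem_compl.mp hb⟩, h2⟩
      · rintro ⟨⟨h1, -⟩, h2⟩
        exact ⟨h1, h2⟩
    have e3 : ∑ g ∈ S, u g * (if ∃ i, (p : ℤ) ∣ g - h i then 1 else 1 - 1 / (p : ℝ)) =
        ∑ g ∈ S, u g - 1 / (p : ℝ) * ∑ g ∈ T, u g := by
      rw [hT, Finset.sum_filter, Finset.mul_sum, ← Finset.sum_sub_distrib]
      refine Finset.sum_congr rfl fun g _ => ?_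
      by_cases hg : (g : ZMod p) ∈ B
      · simp [(hbad g).mpr hg, hg]
      · rw [if_neg (fun hh => hg ((hbad g).mp hh)), if_pos hg]
        ring
    rw [e1, e2, e3]
    linarith

/-- Fewer than `p` integers miss a residue class modulo `p`. -/
theorem exists_forall_not_dvd_sub {k p : ℕ} (hkp : k < p) (h : Fin k → ℤ) :
    ∃ a : ℤ, ∀ i, ¬ (p : ℤ) ∣ h i - a :=
  let ⟨a, ha, _⟩ := exists_class_sum_le hkp h ∅ (fun _ => 0) fun _ => le_rfl
  ⟨a, ha⟩

/-- Greedy sieving by the primes of `P`, never removing an `h i`. -/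
theorem exists_classes_card_le {k : ℕ} (h : Fin k → ℤ) (P : Finset ℕ) (hP : ∀ p ∈ P, k < p)
    (S : Finset ℤ) :
    ∃ a : ℕ → ℤ, (∀ p ∈ P, ∀ i, ¬ (p : ℤ) ∣ h i - a p) ∧
      (({g ∈ S | ∀ p ∈ P, ¬ (p : ℤ) ∣ g - a p}.card : ℕ) : ℝ) ≤
        ∑ g ∈ S, ∏ p ∈ P, (if ∃ i, (p : ℤ) ∣ g - h i then 1 else 1 - 1 / (p : ℝ)) := by
  classical
  induction P using Finset.induction_on generalizing S with
  | empty => exact ⟨fun _ => 0, by simp, by simp⟩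
  | insert p P hpP ih =>
    have hnn : ∀ g : ℤ, 0 ≤ ∏ p ∈ P, (if ∃ i, (p : ℤ) ∣ g - h i then 1 else 1 - 1 / (p : ℝ)) := by
      intro g
      refine Finset.prod_nonneg fun r hr => ?_
      split_ifs
      · exact zero_le_one
      · have : (1 : ℝ) ≤ r := by
          have := hP r (Finset.mem_insert_of_mem hr)
          exact_mod_cast (by omega : 1 ≤ r)
        have := (div_le_one (by linarith : (0 : ℝ) < r)).mpr this
        linarith
    obtain ⟨b, hb1, hb2⟩ := exists_class_sum_le (hP p (Finset.mem_insert_self _ _)) h S _ hnn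
    obtain ⟨a, ha1, ha2⟩ := ih (fun r hr => hP r (Finset.mem_insert_of_mem hr))
      {g ∈ S | ¬ (p : ℤ) ∣ g - b}
    have hup : ∀ r ∈ P, Function.update a p b r = a r := fun r hr =>
      Function.update_of_ne (by rintro rfl; exact hpP hr) _ _
    refine ⟨Function.update a p b, fun r hr => ?_, ?_⟩
    · rcases Finset.mem_insert.mp hr with rfl | hr
      · simpa using hb1
      · rw [hup r hr]
        exact ha1 r hr
    · have e : {g ∈ S | ∀ r ∈ insert p P, ¬ (r : ℤ) ∣ g - Function.update a p b r} =
          {g ∈ {g ∈ S | ¬ (p : ℤ) ∣ g - b} | ∀ r ∈ P, ¬ (r : ℤ) ∣ g - a r} := by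
        ext g
        simp only [Finset.mem_filter, Finset.forall_mem_insert, Function.update_self, and_assoc]
        refine and_congr_right fun _ => and_congr_right fun _ => ?_
        exact forall₂_congr fun r hr => by rw [hup r hr]
      rw [e]
      refine ha2.trans (hb2.trans (le_of_eq ?_))
      refine Finset.sum_congr rfl fun g _ => ?_
      rw [Finset.prod_insert hpP, mul_comm]

/-- A greedy matching in which each element forbids at most `m` partners. -/
theorem exists_injOn_avoiding {α β : Type*} [DecidableEq α] [DecidableEq β] (T : Finset α)
    (L : Finset β) (bad : α → β → Prop) [∀ g, DecidablePred (bad g)] (m : ℕ)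
    (hbad : ∀ g ∈ T, {p ∈ L | bad g p}.card ≤ m) (hcard : T.card + m ≤ L.card) [Nonempty β] :
    ∃ f : α → β, Set.InjOn f T ∧ ∀ g ∈ T, f g ∈ L ∧ ¬ bad g (f g) := by
  induction T using Finset.induction_on with
  | empty => exact ⟨fun _ => Classical.arbitrary β, by simp, by simp⟩
  | insert g T hg ih =>
    rw [Finset.card_insert_of_notMem hg] at hcard
    obtain ⟨f, hf1, hf2⟩ := ih (fun x hx => hbad x (Finset.mem_insert_of_mem hx)) (by omega)
    have hlt : (T.image f ∪ {p ∈ L | bad g p}).card < L.card := by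
      have h1 := Finset.card_union_le (T.image f) {p ∈ L | bad g p}
      have h2 : (T.image f).card ≤ T.card := Finset.card_image_le
      have h3 := hbad g (Finset.mem_insert_self _ _)
      omega
    obtain ⟨p, hpL, hp⟩ := Finset.exists_mem_notMem_of_card_lt_card hlt
    simp only [Finset.mem_union, Finset.mem_image, Finset.mem_filter, not_or, not_exists,
      not_and] at hp
    have hup : ∀ x ∈ T, Function.update f g p x = f x := fun x hx =>
      Function.update_of_ne (by rintro rfl; exact hg hx) _ _
    refine ⟨Function.update f g p, ?_, fun x hx => ?_⟩
    · rw [Finset.coe_insert, Set.injOn_insert (by simpa using hg)]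
      refine ⟨fun x hx y hy hxy => hf1 hx hy ?_, ?_⟩
      · rwa [hup x hx, hup y hy] at hxy
      · rintro ⟨x, hx, hxg⟩
        rw [hup x hx, Function.update_self] at hxg
        exact hp.1 x hx hxg
    · rcases Finset.mem_insert.mp hx with rfl | hx
      · rw [Function.update_self]
        exact ⟨hpL, hp.2 hpL⟩
      · rw [hup x hx]
        exact hf2 x hx

/-- The number of prime divisors `p ≥ B` of a nonzero integer `n` is at most `log |n| / log B`. -/
theorem card_prime_dvd_mul_log_le {P : Finset ℕ} {n : ℤ} (hn : n ≠ 0) {B : ℝ} (hB : 1 ≤ B)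
    (hP : ∀ p ∈ P, p.Prime ∧ B ≤ p ∧ (p : ℤ) ∣ n) :
    (P.card : ℝ) * Real.log B ≤ Real.log |(n : ℝ)| := by
  have h1 : ∏ p ∈ P, p ∣ n.natAbs :=
    Finset.prod_primes_dvd _ (fun p hp => (hP p hp).1.prime) fun p hp =>
      Int.natCast_dvd.mp (hP p hp).2.2
  have h2 : ((∏ p ∈ P, p : ℕ) : ℝ) ≤ |(n : ℝ)| := by
    rw [← Int.cast_abs, Int.abs_eq_natAbs, Int.cast_natCast]
    exact_mod_cast Nat.le_of_dvd (Int.natAbs_pos.mpr hn) h1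
  have h3 : B ^ P.card ≤ ((∏ p ∈ P, p : ℕ) : ℝ) := by
    push_cast
    rw [← Finset.prod_const]
    exact Finset.prod_le_prod (fun _ _ => by linarith) fun p hp => (hP p hp).2.1
  rw [← Real.log_pow]
  exact Real.log_le_log (by positivity) (h3.trans h2)

/-- Increasing positive integers congruent to `r i` modulo `q` and divisible by every prime
`p ≤ k` not dividing `q`. -/
theorem exists_strictMono_modEq {k q : ℕ} (hq : 0 < q) (r : Fin k → ℤ) (hrpos : ∀ i, 0 < r i)
    (hrmono : Monotone r) :
    ∃ d : Fin k → ℤ, StrictMono d ∧ (∀ i, 0 < d i) ∧ (∀ i, d i ≡ r i [ZMOD q]) ∧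
      ∀ p : ℕ, p.Prime → p ≤ k → ¬ p ∣ q → ∀ i, (p : ℤ) ∣ d i := by
  set Q : ℕ := ∏ p ∈ (k + 1).primesBelow with ¬ p ∣ q, p with hQ
  have hprime : ∀ p ∈ {p ∈ (k + 1).primesBelow | ¬ p ∣ q}, p.Prime := fun p hp =>
    (Nat.mem_primesBelow.mp (Finset.mem_filter.mp hp).1).2
  have hQpos : 0 < Q := Finset.prod_pos fun p hp => (hprime p hp).pos
  have hcop : Nat.Coprime Q q := Nat.Coprime.prod_left fun p hp =>
    ((hprime p hp).coprime_iff_not_dvd).mpr (Finset.mem_filter.mp hp).2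
  have hpow : ((Q : ℤ) ^ q.totient) ≡ 1 [ZMOD q] := by
    exact_mod_cast Int.natCast_modEq_iff.mpr (Nat.ModEq.pow_totient hcop)
  have hQ' : (0 : ℤ) < Q := by exact_mod_cast hQpos
  have hq' : (0 : ℤ) < q := by exact_mod_cast hq
  refine ⟨fun i => r i * (Q : ℤ) ^ q.totient + q * Q * (i : ℕ), fun i j hij => ?_, fun i => ?_,
    fun i => ?_, fun p hp hpk hpq i => ?_⟩
  · have h1 : ((i : ℕ) : ℤ) < ((j : ℕ) : ℤ) := by exact_mod_cast hij
    have h2 := hrmono hij.le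
    exact add_lt_add_of_le_of_lt (mul_le_mul_of_nonneg_right h2 (by positivity))
      (mul_lt_mul_of_pos_left h1 (by positivity))
  · have := hrpos i
    positivity
  · have h1 := (hpow.mul_left (r i))
    have h2 : (q : ℤ) * Q * (i : ℕ) ≡ 0 [ZMOD q] :=
      Int.modEq_zero_iff_dvd.mpr ⟨Q * (i : ℕ), by ring⟩
    simpa using h1.add h2
  · have h1 : (p : ℤ) ∣ Q := by
      exact_mod_cast Finset.dvd_prod_of_mem (fun p => p)
        (Finset.mem_filter.mpr ⟨Nat.mem_primesBelow.mpr ⟨by omega, hp⟩, hpq⟩)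
    exact dvd_add (Dvd.dvd.mul_left (dvd_pow h1 (Nat.totient_pos.mpr hq).ne') _)
      (Dvd.dvd.mul_right (Dvd.dvd.mul_left h1 _) _)

/-- The tail condition on a set of primes bounds every finite sum of reciprocals over it. -/
theorem sum_inv_le_of_tail {Z : Set ℕ} {C : ℝ} (hC : 0 < C)
    (hZ : ∀ p' ∈ Z, Summable (fun p : {p : ℕ // p ∈ Z ∧ p' ≤ p} => (1 : ℝ) / (p.1 : ℝ)) ∧
      (∑' p : {p : ℕ // p ∈ Z ∧ p' ≤ p}, (1 : ℝ) / (p.1 : ℝ)) ≤ C / (p' : ℝ))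
    {B : ℝ} (hB : 0 < B) (F : Finset ℕ) (hF : ∀ p ∈ F, p ∈ Z ∧ B ≤ p) :
    ∑ p ∈ F, (1 : ℝ) / p ≤ C / B := by
  classical
  rcases F.eq_empty_or_nonempty with rfl | hne
  · simpa using (div_pos hC hB).le
  set m := F.min' hne with hm
  have hmF : m ∈ F := F.min'_mem hne
  obtain ⟨h1, h2⟩ := hZ m (hF m hmF).1
  have h3 := h1.sum_le_tsum (F.subtype fun p => p ∈ Z ∧ m ≤ p) fun _ _ => by positivity
  rw [Finset.sum_subtype_of_mem (fun p : ℕ => (1 : ℝ) / p)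
    fun p hp => ⟨(hF p hp).1, F.min'_le p hp⟩] at h3
  exact h3.trans (h2.trans (div_le_div_of_nonneg_left hC.le hB (hF m hmF).2))

open Classical in
/-- Integers in `[1, X]` free of primes in `[V, w] \ Z` have a prime factor in `Z`, have a prime
factor above `w`, or are `V`-smooth. -/
theorem card_unsieved_le {X V : ℕ} {w : ℝ} (hw : 0 < w) {Z : Set ℕ} {F : Finset ℕ}
    (hFX : F ⊆ Finset.Icc 1 X)
    (hF : ∀ n ∈ F, ∀ p : ℕ, p.Prime → V ≤ p → (p : ℝ) ≤ w → p ∉ Z → ¬ p ∣ n) :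
    (F.card : ℝ) ≤ X * ∑ p ∈ Finset.Icc 1 X with p ∈ Z, (1 : ℝ) / p + X / w * X.primeCounting +
      ({n ∈ Finset.Icc 1 X | n ∈ V.smoothNumbers}.card : ℕ) := by
  set A : Finset ℕ := {p ∈ Finset.Icc 1 X | p ∈ Z}.biUnion fun p => {n ∈ Finset.Ioc 0 X | p ∣ n}
  set D : Finset ℕ := (Finset.Icc 1 ⌊X / w⌋₊ ×ˢ X.primesLE).image fun x => x.1 * x.2
  set E : Finset ℕ := {n ∈ Finset.Icc 1 X | n ∈ V.smoothNumbers}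
  have hsub : F ⊆ A ∪ D ∪ E := by
    intro n hn
    obtain ⟨hn1, hnX⟩ := Finset.mem_Icc.mp (hFX hn)
    by_cases h1 : ∃ p ∈ Z, p ∣ n
    · obtain ⟨p, hpZ, hpn⟩ := h1
      refine Finset.mem_union_left _ (Finset.mem_union_left _ (Finset.mem_biUnion.mpr ⟨p, ?_, ?_⟩))
      · exact Finset.mem_filter.mpr ⟨Finset.mem_Icc.mpr
          ⟨Nat.pos_of_dvd_of_pos hpn hn1, (Nat.le_of_dvd hn1 hpn).trans hnX⟩, hpZ⟩
      · exact Finset.mem_filter.mpr ⟨Finset.mem_Ioc.mpr ⟨hn1, hnX⟩, hpn⟩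
    by_cases h2 : ∃ p : ℕ, p.Prime ∧ w < p ∧ p ∣ n
    · obtain ⟨p, hp, hpw, m, rfl⟩ := h2
      refine Finset.mem_union_left _ (Finset.mem_union_right _ (Finset.mem_image.mpr
        ⟨(m, p), Finset.mem_product.mpr ⟨Finset.mem_Icc.mpr ⟨?_, ?_⟩, ?_⟩, mul_comm _ _⟩))
      · exact Nat.pos_of_mul_pos_left hn1
      · refine Nat.le_floor ?_
        rw [le_div_iff₀ hw]
        have : ((p * m : ℕ) : ℝ) ≤ X := by exact_mod_cast hnX
        push_cast at this
        nlinarith [Nat.cast_nonneg (α := ℝ) m]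
      · exact Nat.mem_primesLE.mpr
          ⟨(Nat.le_mul_of_pos_right p (Nat.pos_of_mul_pos_left hn1)).trans hnX, hp⟩
    · push Not at h1 h2
      refine Finset.mem_union_right _ (Finset.mem_filter.mpr ⟨hFX hn, ?_⟩)
      rw [Nat.mem_smoothNumbers']
      intro p hp hpn
      by_contra hV
      exact hF n hn p hp (not_lt.mp hV) (not_lt.mp fun h => h2 p hp h hpn)
        (fun hpZ => h1 p hpZ hpn) hpn
  have hA : (A.card : ℝ) ≤ X * ∑ p ∈ Finset.Icc 1 X with p ∈ Z, (1 : ℝ) / p := by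
    rw [Finset.mul_sum]
    refine (Nat.cast_le.mpr Finset.card_biUnion_le).trans ?_
    push_cast
    refine Finset.sum_le_sum fun p _ => ?_
    rw [Nat.Ioc_filter_dvd_card_eq_div, mul_one_div]
    exact Nat.cast_div_le
  have hD : (D.card : ℝ) ≤ X / w * X.primeCounting := by
    have h1 : D.card ≤ ⌊X / w⌋₊ * X.primeCounting := by
      refine Finset.card_image_le.trans (le_of_eq ?_)
      rw [Finset.card_product, Nat.card_Icc, Nat.add_sub_cancel, ← Nat.primesLE_card_eq_primeCounting]
    refine (Nat.cast_le.mpr h1).trans ?_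
    push_cast
    exact mul_le_mul_of_nonneg_right (Nat.floor_le (by positivity)) (Nat.cast_nonneg _)
  have h1 := (Finset.card_le_card hsub).trans
    ((Finset.card_union_le _ _).trans (Nat.add_le_add_right (Finset.card_union_le _ _) _))
  have h2 : (F.card : ℝ) ≤ A.card + D.card + E.card := by exact_mod_cast h1
  linarith

theorem card_le_two_mul_card_image_natAbs_sub (S : Finset ℤ) (c : ℤ) :
    S.card ≤ 2 * (S.image fun g => (g - c).natAbs).card := by
  refine Finset.card_le_mul_card_image S 2 fun n _ => ?_
  refine (Finset.card_le_card (t := {c + n, c - n}) fun g hg => ?_).trans Finset.card_le_two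
  have := (Finset.mem_filter.mp hg).2
  simp only [Finset.mem_insert, Finset.mem_singleton]
  omega

/-- Primes at least `B` dividing some `g - h i` cost little in the sieve product. -/
theorem prod_le_exp_neg_sum {k : ℕ} (h : Fin k → ℤ) {P : Finset ℕ} {B Y : ℝ} (hB : 0 < B)
    (hP : ∀ p ∈ P, p.Prime ∧ B ≤ p) {g : ℤ} (hg : ∀ i, g ≠ h i ∧ |((g - h i : ℤ) : ℝ)| ≤ Y) :
    ∏ p ∈ P, (if ∃ i, (p : ℤ) ∣ g - h i then 1 else 1 - 1 / (p : ℝ)) ≤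
      Real.exp (-∑ p ∈ P, (1 : ℝ) / p + k * (Real.log Y / Real.log 2 / B)) := by
  classical
  have hlog2 : 0 < Real.log 2 := Real.log_pos one_lt_two
  have h1 : ∏ p ∈ P, (if ∃ i, (p : ℤ) ∣ g - h i then 1 else 1 - 1 / (p : ℝ)) ≤
      Real.exp (∑ p ∈ P, (-(1 : ℝ) / p + if ∃ i, (p : ℤ) ∣ g - h i then (1 : ℝ) / p else 0)) := by
    rw [Real.exp_sum]
    refine Finset.prod_le_prod (fun p hp => ?_) (fun p hp => ?_)
    · split_ifs
      · exact zero_le_one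
      · have : (1 : ℝ) ≤ p := by exact_mod_cast (hP p hp).1.one_le
        have := (div_le_one (by linarith : (0 : ℝ) < p)).mpr this
        linarith
    · split_ifs
      · rw [neg_div, neg_add_cancel, Real.exp_zero]
      · have := Real.add_one_le_exp (-(1 : ℝ) / p)
        rw [add_zero]
        refine le_trans (le_of_eq ?_) this
        ring
  refine h1.trans (Real.exp_le_exp.mpr ?_)
  rw [Finset.sum_add_distrib]
  refine add_le_add (le_of_eq ?_) ?_
  · rw [← Finset.sum_neg_distrib]
    exact Finset.sum_congr rfl fun p _ => by ring
  have h2 : ∀ i, ∑ p ∈ P with ((p : ℕ) : ℤ) ∣ g - h i, (1 : ℝ) / p ≤ Real.log Y / Real.log 2 / B := by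
    intro i
    have hne : g - h i ≠ 0 := sub_ne_zero.mpr (hg i).1
    have hc := card_prime_dvd_mul_log_le (P := {p ∈ P | ((p : ℕ) : ℤ) ∣ g - h i}) hne
      (B := 2) one_le_two (fun p hp => by
        have hp' := Finset.mem_filter.mp hp
        exact ⟨(hP p hp'.1).1, by exact_mod_cast (hP p hp'.1).1.two_le, hp'.2⟩)
    have hlog : Real.log |((g - h i : ℤ) : ℝ)| ≤ Real.log Y :=
      Real.log_le_log (abs_pos.mpr (by exact_mod_cast hne)) (hg i).2
    have hs : ∑ p ∈ P with ((p : ℕ) : ℤ) ∣ g - h i, (1 : ℝ) / p ≤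
        ({p ∈ P | ((p : ℕ) : ℤ) ∣ g - h i}.card : ℝ) * (1 / B) := by
      rw [← nsmul_eq_mul]
      refine Finset.sum_le_card_nsmul _ _ _ fun p hp => ?_
      exact one_div_le_one_div_of_le hB (hP p (Finset.mem_filter.mp hp).1).2
    rw [div_eq_mul_one_div _ B]
    refine hs.trans (mul_le_mul_of_nonneg_right ?_ (by positivity))
    rw [le_div_iff₀ hlog2]
    exact hc.trans hlog
  calc ∑ p ∈ P, (if ∃ i, (p : ℤ) ∣ g - h i then (1 : ℝ) / p else 0)
      ≤ ∑ p ∈ P, ∑ i, (if (p : ℤ) ∣ g - h i then (1 : ℝ) / p else 0) := by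
        refine Finset.sum_le_sum fun p _ => ?_
        have hnn : ∀ i ∈ Finset.univ, (0 : ℝ) ≤ if (p : ℤ) ∣ g - h i then (1 : ℝ) / p else 0 :=
          fun i _ => by split_ifs <;> positivity
        split_ifs with hex
        · obtain ⟨i, hi⟩ := hex
          have := Finset.single_le_sum hnn (Finset.mem_univ i)
          rwa [if_pos hi] at this
        · exact Finset.sum_nonneg hnn
    _ = ∑ i, ∑ p ∈ P with ((p : ℕ) : ℤ) ∣ g - h i, (1 : ℝ) / p := by
        rw [Finset.sum_comm]
        exact Finset.sum_congr rfl fun i _ => (Finset.sum_filter _ _).symm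
    _ ≤ ∑ _i : Fin k, Real.log Y / Real.log 2 / B := Finset.sum_le_sum fun i _ => h2 i
    _ = _ := by rw [Finset.sum_const, Finset.card_univ, Fintype.card_fin, nsmul_eq_mul]

open Classical in
/-- If the elements of `(0, z]` left by the sieve are outnumbered by the primes in `(w, y]`, there
are residue classes modulo the primes up to `y` outside `Z` whose union meets `(0, z]` exactly in
the complement of the `h i`. -/
theorem exists_classes_covering {k : ℕ} {h : Fin k → ℤ} {y z w : ℝ} {c : ℤ} {V₀ V : ℕ}
    {Z : Set ℕ} {e : ℕ → ℤ} (he : ∀ p : ℕ, p.Prime → ∀ i, ¬ (p : ℤ) ∣ h i - e p)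
    (hc : ∀ p : ℕ, p.Prime → V ≤ p → (p : ℝ) ≤ w → ∀ i, ¬ (p : ℤ) ∣ h i - c)
    (hkV : k < V₀) (hVw : (V : ℝ) ≤ w) (hw1 : 1 < w) (hwy : w ≤ y) (hzw : z < w ^ 2)
    (hh : ∀ i, 0 < h i ∧ (h i : ℝ) ≤ z) (hc0 : 0 ≤ c ∧ (c : ℝ) ≤ z)
    (hcount : (2 * (⌊z⌋₊ * ∑ p ∈ Finset.Icc 1 ⌊z⌋₊ with p ∈ Z, (1 : ℝ) / p +
        ⌊z⌋₊ / w * ⌊z⌋₊.primeCounting +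
        ({n ∈ Finset.Icc 1 ⌊z⌋₊ | n ∈ V.smoothNumbers}.card : ℕ)) + 1) *
        Real.exp (-∑ p ∈ V.primesBelow with V₀ ≤ p ∧ p ∉ Z, (1 : ℝ) / p +
          k * (Real.log z / Real.log 2 / V₀)) + k ≤
      ({p ∈ ⌊y⌋₊.primesLE | w < (p : ℕ) ∧ p ∉ Z}.card : ℕ)) :
    ∃ a : ℕ → ℤ, (∀ p : ℕ, p < V₀ → p < V → a p = e p) ∧
      (∀ p : ℕ, p.Prime → ∀ i, ¬ (p : ℤ) ∣ h i - a p) ∧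
      ∀ g : ℤ, 0 < g → (g : ℝ) ≤ z → (∀ i, g ≠ h i) →
        ∃ p : ℕ, p.Prime ∧ (p : ℝ) ≤ y ∧ p ∉ Z ∧ (p : ℤ) ∣ g - a p := by
  set X := ⌊z⌋₊ with hX
  set P : Finset ℕ := {p ∈ V.primesBelow | V₀ ≤ p ∧ p ∉ Z} with hP
  set L : Finset ℕ := {p ∈ ⌊y⌋₊.primesLE | w < p ∧ p ∉ Z} with hL
  have hz0 : 0 ≤ z := le_trans (by exact_mod_cast hc0.1) hc0.2
  have hw0 : 0 < w := by linarith
  have hV0 : (0 : ℝ) < V₀ := by exact_mod_cast (by omega : 0 < V₀)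
  have hPmem : ∀ p ∈ P, p.Prime ∧ p < V ∧ V₀ ≤ p ∧ p ∉ Z := fun p hp => by
    simp only [hP, Finset.mem_filter, Nat.mem_primesBelow] at hp
    tauto
  have hLmem : ∀ p ∈ L, p.Prime ∧ (p : ℝ) ≤ y ∧ w < p ∧ p ∉ Z := fun p hp => by
    simp only [hL, Finset.mem_filter, Nat.mem_primesLE] at hp
    exact ⟨hp.1.2, (Nat.le_floor_iff (by linarith)).mp hp.1.1, hp.2⟩
  set S : Finset ℤ := {g ∈ Finset.Ioc 0 ⌊z⌋ | (∀ i, g ≠ h i) ∧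
    ∀ p : ℕ, p.Prime → V ≤ p → (p : ℝ) ≤ w → p ∉ Z → ¬ (p : ℤ) ∣ g - c} with hS
  have hSmem : ∀ g ∈ S, 0 < g ∧ (g : ℝ) ≤ z := fun g hg => by
    have := Finset.mem_Ioc.mp (Finset.mem_filter.mp hg).1
    exact ⟨this.1, Int.le_floor.mp this.2⟩
  have habs : ∀ g ∈ S, ∀ i, |((g - h i : ℤ) : ℝ)| ≤ z := fun g hg i => by
    have h1 := hSmem g hg
    have h2 := hh i
    have h3 : (0 : ℝ) < g := by exact_mod_cast h1.1
    have h4 : (0 : ℝ) < h i := by exact_mod_cast h2.1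
    push_cast
    exact abs_le.mpr ⟨by linarith, by linarith⟩
  have hScard : (S.card : ℝ) ≤ 2 * (X * ∑ p ∈ Finset.Icc 1 X with p ∈ Z, (1 : ℝ) / p +
      X / w * X.primeCounting + ({n ∈ Finset.Icc 1 X | n ∈ V.smoothNumbers}.card : ℕ)) + 1 := by
    have h1 := card_le_two_mul_card_image_natAbs_sub (S.erase c) c
    have h2 := card_unsieved_le (X := X) (V := V) hw0 (Z := Z)
      (F := (S.erase c).image fun g => (g - c).natAbs) (fun n hn => ?_)
      (fun n hn p hp hpV hpw hpZ hpn => ?_)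
    · have h3 : S.card ≤ (S.erase c).card + 1 := by
        have := Finset.pred_card_le_card_erase (s := S) (a := c)
        omega
      have h4 : (S.card : ℝ) ≤ 2 * ((S.erase c).image fun g => (g - c).natAbs).card + 1 := by
        exact_mod_cast h3.trans (by omega)
      linarith
    · obtain ⟨g, hg, rfl⟩ := Finset.mem_image.mp hn
      obtain ⟨hgc, hgS⟩ := Finset.mem_erase.mp hg
      have hg1 := Finset.mem_Ioc.mp (Finset.mem_filter.mp hgS).1
      have hcz : c ≤ ⌊z⌋ := Int.le_floor.mpr hc0.2
      have hXz : (X : ℤ) = ⌊z⌋ := Int.natCast_floor_eq_floor hz0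
      rw [Finset.mem_Icc]
      omega
    · obtain ⟨g, hg, rfl⟩ := Finset.mem_image.mp hn
      exact (Finset.mem_filter.mp (Finset.mem_of_mem_erase hg)).2.2 p hp hpV hpw hpZ
        (Int.natCast_dvd.mpr hpn)
  obtain ⟨a₁, ha₁, hT⟩ := exists_classes_card_le h P
    (fun p hp => hkV.trans_le (hPmem p hp).2.2.1) S
  set T : Finset ℤ := {g ∈ S | ∀ p ∈ P, ¬ (p : ℤ) ∣ g - a₁ p} with hTdef
  have hTcard : T.card + k ≤ L.card := by
    have h1 : (T.card : ℝ) ≤ S.card * Real.exp (-∑ p ∈ P, (1 : ℝ) / p +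
        k * (Real.log z / Real.log 2 / V₀)) := by
      refine hT.trans ?_
      rw [← nsmul_eq_mul]
      refine Finset.sum_le_card_nsmul _ _ _ fun g hg => ?_
      refine prod_le_exp_neg_sum h hV0 (fun p hp => ⟨(hPmem p hp).1, ?_⟩) fun i => ⟨?_, habs g hg i⟩
      · exact_mod_cast (hPmem p hp).2.2.1
      · exact (Finset.mem_filter.mp hg).2.1 i
    have h2 := h1.trans (mul_le_mul_of_nonneg_right hScard (Real.exp_pos _).le)
    have h3 : (T.card : ℝ) + k ≤ L.card := by linarith
    exact_mod_cast h3
  have hbad : ∀ g ∈ T, {p ∈ L | ∃ i, ((p : ℕ) : ℤ) ∣ g - h i}.card ≤ k := by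
    intro g hg
    have hgS := (Finset.mem_filter.mp hg).1
    have hsub : {p ∈ L | ∃ i, ((p : ℕ) : ℤ) ∣ g - h i} ⊆
        Finset.univ.biUnion fun i => {p ∈ L | ((p : ℕ) : ℤ) ∣ g - h i} := by
      intro p hp
      obtain ⟨hpL, i, hi⟩ := Finset.mem_filter.mp hp
      exact Finset.mem_biUnion.mpr ⟨i, Finset.mem_univ _, Finset.mem_filter.mpr ⟨hpL, hi⟩⟩
    refine (Finset.card_le_card hsub).trans ((Finset.card_biUnion_le_card_mul _ _ 1 fun i _ => ?_).trans
      (by simp))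
    have hne : g - h i ≠ 0 := sub_ne_zero.mpr ((Finset.mem_filter.mp hgS).2.1 i)
    have h1 := card_prime_dvd_mul_log_le (P := {p ∈ L | ((p : ℕ) : ℤ) ∣ g - h i}) hne hw1.le
      (fun p hp => ⟨(hLmem p (Finset.mem_filter.mp hp).1).1,
        (hLmem p (Finset.mem_filter.mp hp).1).2.2.1.le, (Finset.mem_filter.mp hp).2⟩)
    have h2 : Real.log |((g - h i : ℤ) : ℝ)| < 2 * Real.log w := by
      have : 2 * Real.log w = Real.log (w ^ 2) := by rw [Real.log_pow]; norm_num
      rw [this]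
      exact Real.log_lt_log (abs_pos.mpr (by exact_mod_cast hne)) ((habs g hgS i).trans_lt hzw)
    have h3 := lt_of_mul_lt_mul_right (h1.trans_lt h2) (Real.log_pos hw1).le
    have h4 : {p ∈ L | ((p : ℕ) : ℤ) ∣ g - h i}.card < 2 := by exact_mod_cast h3
    omega
  obtain ⟨f, hfinj, hf⟩ := exists_injOn_avoiding T L (fun g p => ∃ i, (p : ℤ) ∣ g - h i) k hbad hTcard
  refine ⟨fun p => if p ∈ P then a₁ p else if V ≤ p ∧ (p : ℝ) ≤ w then c else
    if p ∈ T.image f then Function.invFunOn f T p else e p, ?_, ?_, ?_⟩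
  · intro p hp0 hpV
    dsimp only
    have h1 : p ∉ P := fun hp => by
      have := (hPmem p hp).2.2.1
      omega
    have h2 : p ∉ T.image f := fun hp => by
      obtain ⟨g, hg, rfl⟩ := Finset.mem_image.mp hp
      have h3 := (hLmem _ (hf g hg).1).2.2.1
      have h4 : (f g : ℝ) < V := by exact_mod_cast hpV
      linarith
    rw [if_neg h1, if_neg (fun hh => by omega), if_neg h2]
  · intro p hp i
    dsimp only
    split_ifs with h1 h2 h3
    · exact ha₁ p h1 i
    · exact hc p hp h2.1 h2.2 i
    · obtain ⟨g, hg, rfl⟩ := Finset.mem_image.mp h3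
      rw [hfinj.leftInvOn_invFunOn hg, dvd_sub_comm]
      exact fun hd => (hf g hg).2 ⟨i, hd⟩
    · exact he p hp i
  · intro g hg0 hgz hgh
    by_cases h1 : ∃ p ∈ P, (p : ℤ) ∣ g - a₁ p
    · obtain ⟨p, hp, hd⟩ := h1
      have hpm := hPmem p hp
      refine ⟨p, hpm.1, ?_, hpm.2.2.2, by dsimp only; rwa [if_pos hp]⟩
      have : (p : ℝ) < V := by exact_mod_cast hpm.2.1
      linarith
    by_cases h2 : ∃ p : ℕ, p.Prime ∧ V ≤ p ∧ (p : ℝ) ≤ w ∧ p ∉ Z ∧ (p : ℤ) ∣ g - c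
    · obtain ⟨p, hp, hpV, hpw, hpZ, hd⟩ := h2
      have hpP : p ∉ P := fun hpP => by
        have := (hPmem p hpP).2.1
        omega
      exact ⟨p, hp, hpw.trans hwy, hpZ, by dsimp only; rwa [if_neg hpP, if_pos ⟨hpV, hpw⟩]⟩
    push Not at h1 h2
    have hgS : g ∈ S := Finset.mem_filter.mpr
      ⟨Finset.mem_Ioc.mpr ⟨hg0, Int.le_floor.mpr hgz⟩, hgh, h2⟩
    have hgT : g ∈ T := Finset.mem_filter.mpr ⟨hgS, h1⟩
    have hfm := hLmem _ (hf g hgT).1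
    have hfP : f g ∉ P := fun hp => by
      have h3 : (f g : ℝ) < V := by exact_mod_cast (hPmem _ hp).2.1
      linarith [hfm.2.2.1]
    refine ⟨f g, hfm.1, hfm.2.1, hfm.2.2.2, ?_⟩
    dsimp only
    rw [if_neg hfP, if_neg (fun hh => absurd hh.2 (not_le.mpr hfm.2.2.1)),
      if_pos (Finset.mem_image_of_mem f hgT), hfinj.leftInvOn_invFunOn hgT, sub_self]
    exact dvd_zero _

open Filter in
/-- Chebyshev: many primes in `(y / 8, y]` lie outside a sparse set `Z`. -/
theorem eventually_card_large_primes_ge {C : ℝ} (hC : 0 < C) :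
    ∀ᶠ y : ℝ in atTop, ∀ Z : Set ℕ,
      (∀ B : ℝ, 0 < B → ∀ F : Finset ℕ, (∀ p ∈ F, p ∈ Z ∧ B ≤ p) →
        ∑ p ∈ F, (1 : ℝ) / p ≤ C / B) →
      ∀ L : Finset ℕ, (∀ p : ℕ, p.Prime → y / 8 < p → (p : ℝ) ≤ y → p ∉ Z → p ∈ L) →
      1 / 8 * (y / Real.log y) - 8 * C ≤ L.card := by
  classical
  have hlog2 := Real.log_two_gt_d9
  have hlog2' := Real.log_two_lt_d9
  have hlog4 : Real.log 4 + 1 / 2 ≤ 2 := by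
    rw [show (4 : ℝ) = 2 ^ 2 by norm_num, Real.log_pow]
    push_cast
    linarith
  have hlog8 : Real.log 8 ≤ 3 := by
    rw [show (8 : ℝ) = 2 ^ 3 by norm_num, Real.log_pow]
    push_cast
    linarith
  have hup := (tendsto_id.atTop_div_const (r := 8) (by norm_num : (0 : ℝ) < 8)).eventually
    (Chebyshev.eventually_primeCounting_le (ε := 1 / 2) (by norm_num))
  have hlo : ∀ᶠ y : ℝ in atTop, Real.log y ≤ 1 / 20 * y := by
    filter_upwards [Real.isLittleO_log_id_atTop.bound (by norm_num : (0 : ℝ) < 1 / 20),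
      eventually_ge_atTop 1] with y hy hy1
    rw [Real.norm_of_nonneg (Real.log_nonneg hy1), id, Real.norm_of_nonneg (by linarith)] at hy
    exact hy
  filter_upwards [hup, hlo, eventually_ge_atTop 1000,
    Real.tendsto_log_atTop.eventually_ge_atTop 9] with y hy8 hylog hy hL Z hZ L hLmem
  simp only [id] at hy8
  have hy0 : 0 < y := by linarith
  set l := Real.log y with hl
  have hl0 : 0 < l := by linarith
  have h1 : y / (2 * l) ≤ ⌊y⌋₊.primeCounting := by
    refine le_trans ?_ (Chebyshev.pi_ge' (by linarith : 1 < y))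
    rw [← hl, div_le_div_iff₀ (by positivity) hl0]
    have h2 : Real.log (y + 2) ≤ l + 1 := by
      have : y + 2 ≤ y * 2 := by linarith
      have := Real.log_le_log (by linarith) this
      rw [Real.log_mul hy0.ne' two_ne_zero] at this
      linarith
    have h3 : y / 2 ≤ (y - 1) * Real.log 2 - Real.log (y + 2) := by nlinarith
    nlinarith
  have h2 : (⌊y / 8⌋₊.primeCounting : ℝ) ≤ 3 / 8 * (y / l) := by
    refine hy8.trans ?_
    have hlog : 2 / 3 * l ≤ Real.log (y / 8) := by
      rw [Real.log_div hy0.ne' (by norm_num)]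
      linarith
    calc (Real.log 4 + 1 / 2) * (y / 8) / Real.log (y / 8) ≤ 2 * (y / 8) / (2 / 3 * l) := by
          gcongr
      _ = _ := by field_simp
  have h3 : (({p ∈ ⌊y⌋₊.primesLE | y / 8 < (p : ℕ) ∧ p ∈ Z}.card : ℕ) : ℝ) ≤ 8 * C := by
    have hs := hZ (y / 8) (by positivity) {p ∈ ⌊y⌋₊.primesLE | y / 8 < (p : ℕ) ∧ p ∈ Z}
      fun p hp => by
        have := (Finset.mem_filter.mp hp).2
        exact ⟨this.2, this.1.le⟩
    have hs2 : (({p ∈ ⌊y⌋₊.primesLE | y / 8 < (p : ℕ) ∧ p ∈ Z}.card : ℕ) : ℝ) * (1 / y) ≤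
        ∑ p ∈ ⌊y⌋₊.primesLE with y / 8 < (p : ℕ) ∧ p ∈ Z, (1 : ℝ) / (p : ℕ) := by
      rw [← nsmul_eq_mul]
      refine Finset.card_nsmul_le_sum _ _ _ fun p hp => ?_
      have hp' := Nat.mem_primesLE.mp (Finset.mem_filter.mp hp).1
      exact one_div_le_one_div_of_le (by exact_mod_cast hp'.2.pos)
        ((Nat.le_floor_iff hy0.le).mp hp'.1)
    have hs3 := hs2.trans hs
    rw [mul_one_div, div_le_iff₀ hy0] at hs3
    refine hs3.trans (le_of_eq ?_)
    field_simp
  have h4 : ⌊y⌋₊.primesLE ⊆ ⌊y / 8⌋₊.primesLE ∪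
      ({p ∈ ⌊y⌋₊.primesLE | y / 8 < (p : ℕ) ∧ p ∈ Z} ∪ L) := by
    intro p hp
    have hp' := Nat.mem_primesLE.mp hp
    have hpy := (Nat.le_floor_iff hy0.le).mp hp'.1
    by_cases h8 : (p : ℝ) ≤ y / 8
    · exact Finset.mem_union_left _ (Nat.mem_primesLE.mpr ⟨Nat.le_floor h8, hp'.2⟩)
    · refine Finset.mem_union_right _ ?_
      by_cases hpZ : p ∈ Z
      · exact Finset.mem_union_left _ (Finset.mem_filter.mpr ⟨hp, not_le.mp h8, hpZ⟩)
      · exact Finset.mem_union_right _ (hLmem p hp'.2 (not_le.mp h8) hpy hpZ)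
  have h5 := (Finset.card_le_card h4).trans ((Finset.card_union_le _ _).trans
    (Nat.add_le_add_left (Finset.card_union_le _ _) _))
  rw [Nat.primesLE_card_eq_primeCounting, Nat.primesLE_card_eq_primeCounting] at h5
  have h6 : (⌊y⌋₊.primeCounting : ℝ) ≤ ⌊y / 8⌋₊.primeCounting +
      ((({p ∈ ⌊y⌋₊.primesLE | y / 8 < (p : ℕ) ∧ p ∈ Z}.card : ℕ) : ℝ) + L.card) := by
    exact_mod_cast h5
  have h7 : y / (2 * l) = 1 / 2 * (y / l) := by field_simp
  linarith

/-- The smoothness bound used for sieving `(0, z]` when `y ≤ z ≤ y log log y`. -/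
noncomputable def smoothBound (y : ℝ) : ℕ := ⌊Real.exp ((Real.log y ^ (1 / 5 : ℝ)) ^ 2)⌋₊

theorem log_smoothBound_mem {y : ℝ} (hs : 2 ≤ Real.log y ^ (1 / 5 : ℝ)) :
    (Real.log y ^ (1 / 5 : ℝ)) ^ 2 / 2 ≤ Real.log (smoothBound y) ∧
      Real.log (smoothBound y) ≤ (Real.log y ^ (1 / 5 : ℝ)) ^ 2 := by
  unfold smoothBound
  set t := (Real.log y ^ (1 / 5 : ℝ)) ^ 2
  have ht : 4 ≤ t := by nlinarith
  have h1 : 2 ≤ Real.exp t := by linarith [Real.add_one_le_exp t]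
  have h2 : Real.exp t / 2 ≤ ⌊Real.exp t⌋₊ := by linarith [Nat.lt_floor_add_one (Real.exp t)]
  constructor
  · have h3 := Real.log_le_log (by positivity) h2
    rw [Real.log_div (Real.exp_pos t).ne' two_ne_zero, Real.log_exp] at h3
    linarith [Real.log_two_lt_d9]
  · have h3 := Real.log_le_log (by linarith [Real.exp_pos t]) (Nat.floor_le (Real.exp_pos t).le)
    rwa [Real.log_exp] at h3

open Filter in
theorem tendsto_log_rpow_atTop : Tendsto (fun y : ℝ => Real.log y ^ (1 / 5 : ℝ)) atTop atTop :=
  (tendsto_rpow_atTop (by norm_num)).comp Real.tendsto_log_atTop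

theorem rpow_one_div_five_pow {x : ℝ} (hx : 0 ≤ x) : (x ^ (1 / 5 : ℝ)) ^ 5 = x := by
  rw [← Real.rpow_natCast, ← Real.rpow_mul hx]
  norm_num

open Filter in
open Classical in
/-- Sieving by the primes in `[log y, smoothBound y) \ Z` saves a power of `log y`. -/
theorem eventually_exp_neg_sum_le (k : ℕ) {C : ℝ} (hC : 0 < C) :
    ∀ᶠ y : ℝ in atTop, ∀ z : ℝ, y ≤ z → z ≤ y * Real.log (Real.log y) → ∀ Z : Set ℕ,
      (∀ F : Finset ℕ, (∀ p ∈ F, p ∈ Z) → ∑ p ∈ F, (1 : ℝ) / p ≤ C ^ 2 / Real.log z) →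
      Real.exp (-∑ p ∈ (smoothBound y).primesBelow with ⌈Real.log y⌉₊ ≤ p ∧ p ∉ Z, (1 : ℝ) / p +
          k * (Real.log z / Real.log 2 / ⌈Real.log y⌉₊)) ≤
        Real.exp (5 + C ^ 2 + 4 * k) * Real.exp (-(Real.log (Real.log y) / 15)) := by
  filter_upwards [eventually_ge_atTop 1, Real.tendsto_log_atTop.eventually_ge_atTop 1,
    tendsto_log_rpow_atTop.eventually_ge_atTop 2] with y hy hL hs z hyz hzy Z hZ
  obtain ⟨hV1, hV2⟩ := log_smoothBound_mem hs
  have hlog2 := Real.log_two_gt_d9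
  have hlog2' := Real.log_two_lt_d9
  set V := smoothBound y
  set l := Real.log y with hl
  set s := l ^ (1 / 5 : ℝ) with hsdef
  have hl0 : 0 < l := by linarith
  have hs0 : 0 < s := by linarith
  have hls : Real.log s = 1 / 5 * Real.log l := Real.log_rpow hl0 _
  have hll : Real.log l ≤ l := (Real.log_le_sub_one_of_pos hl0).trans (by linarith)
  have hz0 : 0 < z := by linarith
  have hlz : l ≤ Real.log z := Real.log_le_log (by linarith) hyz
  have hlz2 : Real.log z ≤ 2 * l := by
    have h1 : z ≤ y * l := hzy.trans (mul_le_mul_of_nonneg_left hll (by linarith))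
    have h2 := Real.log_le_log hz0 h1
    rw [Real.log_mul (by linarith) hl0.ne'] at h2
    linarith
  have hceil : l ≤ ⌈l⌉₊ := Nat.le_ceil l
  have hceil2 : (⌈l⌉₊ : ℝ) ≤ 2 * l := by linarith [Nat.ceil_lt_add_one hl0.le]
  have hV0 : 2 ≤ V := by
    by_contra hlt
    have h1 : V = 0 ∨ V = 1 := by omega
    have : Real.log V = 0 := by rcases h1 with h | h <;> simp [h]
    nlinarith
  have h1 := log_log_le_sum_inv_primesBelow hV0
  have h2 := sum_inv_primesBelow_le ⌈l⌉₊
  have h3 := hZ {p ∈ V.primesBelow | p ∈ Z} fun p hp => (Finset.mem_filter.mp hp).2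
  have h4 : ∑ p ∈ V.primesBelow, (1 : ℝ) / p ≤
      ∑ p ∈ V.primesBelow with ⌈l⌉₊ ≤ p ∧ p ∉ Z, (1 : ℝ) / p +
        (∑ p ∈ ⌈l⌉₊.primesBelow, (1 : ℝ) / p + ∑ p ∈ V.primesBelow with p ∈ Z, (1 : ℝ) / p) := by
    have hsub : V.primesBelow ⊆ {p ∈ V.primesBelow | ⌈l⌉₊ ≤ p ∧ p ∉ Z} ∪
        (⌈l⌉₊.primesBelow ∪ {p ∈ V.primesBelow | p ∈ Z}) := by
      intro p hp
      have := (Nat.mem_primesBelow.mp hp).2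
      simp only [Finset.mem_union, Finset.mem_filter, hp, true_and, Nat.mem_primesBelow, this,
        and_true]
      by_cases hpZ : p ∈ Z
      · exact Or.inr (Or.inr hpZ)
      · rcases lt_or_ge p ⌈l⌉₊ with h | h
        · exact Or.inr (Or.inl h)
        · exact Or.inl ⟨h, hpZ⟩
    have hun : ∀ A B : Finset ℕ, ∑ p ∈ A ∪ B, (1 : ℝ) / p ≤
        ∑ p ∈ A, (1 : ℝ) / p + ∑ p ∈ B, (1 : ℝ) / p := fun A B => by
      rw [← Finset.sum_union_inter]
      exact le_add_of_nonneg_right (Finset.sum_nonneg fun _ _ => by positivity)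
    exact (Finset.sum_le_sum_of_subset_of_nonneg hsub fun _ _ _ => by positivity).trans
      ((hun _ _).trans (add_le_add_right (hun _ _) _))
  have h5 : C ^ 2 / Real.log z ≤ C ^ 2 := div_le_self (by positivity) (by linarith)
  have h6 : 2 / 5 * Real.log l - 1 ≤ Real.log (Real.log V) := by
    have := Real.log_le_log (by positivity) hV1
    rw [Real.log_div (by positivity) two_ne_zero, Real.log_pow, hls] at this
    push_cast at this
    linarith
  have h7 : Real.log (⌈l⌉₊ : ℝ) ≤ Real.log l + 1 := by
    have := Real.log_le_log (by linarith) hceil2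
    rw [Real.log_mul two_ne_zero hl0.ne'] at this
    linarith
  have h8 : Real.log z / Real.log 2 / ⌈l⌉₊ ≤ 4 := by
    rw [div_le_iff₀ (by linarith), div_le_iff₀ (by linarith)]
    nlinarith
  have h9 : (k : ℝ) * (Real.log z / Real.log 2 / ⌈l⌉₊) ≤ k * 4 :=
    mul_le_mul_of_nonneg_left h8 (Nat.cast_nonneg k)
  rw [← Real.exp_add]
  refine Real.exp_le_exp.mpr ?_
  linarith

open Filter in
open Classical in
/-- The number of integers left after sieving by the medium primes. -/
theorem eventually_unsieved_bound_le {C : ℝ} (hC : 0 < C) :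
    ∀ᶠ y : ℝ in atTop, ∀ z : ℝ, y ≤ z → z ≤ y * Real.log (Real.log y) → ∀ Z : Set ℕ,
      (∀ F : Finset ℕ, (∀ p ∈ F, p ∈ Z) → ∑ p ∈ F, (1 : ℝ) / p ≤ C ^ 2 / Real.log z) →
      2 * (⌊z⌋₊ * ∑ p ∈ Finset.Icc 1 ⌊z⌋₊ with p ∈ Z, (1 : ℝ) / p +
        ⌊z⌋₊ / (y / 8) * ⌊z⌋₊.primeCounting +
        ({n ∈ Finset.Icc 1 ⌊z⌋₊ | n ∈ (smoothBound y).smoothNumbers}.card : ℕ)) + 1 ≤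
      (2 * C ^ 2 + 35) * (y / Real.log y * Real.log (Real.log y) ^ 2) := by
  obtain ⟨y₀, hy₀⟩ := eventually_atTop.mp
    (Chebyshev.eventually_primeCounting_le (ε := 1 / 2) (by norm_num))
  have hlog2' := Real.log_two_lt_d9
  have hlog4 : Real.log 4 + 1 / 2 ≤ 2 := by
    rw [show (4 : ℝ) = 2 ^ 2 by norm_num, Real.log_pow]
    push_cast
    linarith
  filter_upwards [eventually_ge_atTop 1, eventually_ge_atTop y₀,
    Real.tendsto_log_atTop.eventually_ge_atTop 1,
    (Real.tendsto_log_atTop.comp Real.tendsto_log_atTop).eventually_ge_atTop 1,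
    tendsto_log_rpow_atTop.eventually_ge_atTop 14] with y hy hyy₀ hL hLL hs z hyz hzy Z hZ
  obtain ⟨hV1, hV2⟩ := log_smoothBound_mem (by linarith : 2 ≤ Real.log y ^ (1 / 5 : ℝ))
  simp only [Function.comp] at hLL
  set V := smoothBound y
  set l := Real.log y with hl
  set m := Real.log l with hm
  set s := l ^ (1 / 5 : ℝ) with hsdef
  have hl0 : 0 < l := by linarith
  have hs0 : 0 < s := by linarith
  have hs5 : s ^ 5 = l := rpow_one_div_five_pow hl0.le
  have hls : Real.log s = 1 / 5 * m := Real.log_rpow hl0 _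
  have hlss : Real.log s ≤ s := (Real.log_le_sub_one_of_pos hs0).trans (by linarith)
  have hy0 : 0 < y := by linarith
  have hz0 : 0 < z := by linarith
  have hlz : l ≤ Real.log z := Real.log_le_log hy0 hyz
  have hX : (⌊z⌋₊ : ℝ) ≤ z := Nat.floor_le hz0.le
  set W := y / l with hW
  have hyW : y = W * l := by rw [hW]; field_simp
  have hW1 : 1 ≤ W := by
    rw [hW, one_le_div hl0]
    exact (Real.log_le_sub_one_of_pos hy0).trans (by linarith)
  have hW0 : 0 < W := by linarith
  have hzl : z / l ≤ W * m := by
    rw [div_le_iff₀ hl0]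
    calc z ≤ y * m := hzy
      _ = W * m * l := by rw [hyW]; ring
  have hmm : m ≤ m ^ 2 := by nlinarith
  have hzl2 : z / l ≤ W * m ^ 2 := hzl.trans (mul_le_mul_of_nonneg_left hmm hW0.le)
  have h1 : ⌊z⌋₊ * ∑ p ∈ Finset.Icc 1 ⌊z⌋₊ with p ∈ Z, (1 : ℝ) / p ≤ C ^ 2 * (W * m ^ 2) := by
    have ha := hZ {p ∈ Finset.Icc 1 ⌊z⌋₊ | p ∈ Z} fun p hp => (Finset.mem_filter.mp hp).2
    have hb : C ^ 2 / Real.log z ≤ C ^ 2 / l := by gcongr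
    calc _ ≤ z * (C ^ 2 / l) := by
          refine mul_le_mul hX (ha.trans hb) (Finset.sum_nonneg fun _ _ => by positivity) hz0.le
      _ = C ^ 2 * (z / l) := by ring
      _ ≤ _ := by gcongr
  have h2 : ⌊z⌋₊ / (y / 8) * (⌊z⌋₊.primeCounting : ℝ) ≤ 16 * (W * m ^ 2) := by
    have ha : (⌊z⌋₊.primeCounting : ℝ) ≤ 2 * (z / l) := by
      refine (hy₀ z (hyy₀.trans hyz)).trans ?_
      rw [← mul_div_assoc]
      gcongr
    have hb : ⌊z⌋₊ / (y / 8) ≤ 8 * m := by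
      rw [div_le_iff₀ (by positivity)]
      linarith
    calc _ ≤ 8 * m * (2 * (W * m)) := by
          refine mul_le_mul hb (ha.trans (by linarith)) (Nat.cast_nonneg _) (by positivity)
      _ = _ := by ring
  have h3 : (({n ∈ Finset.Icc 1 ⌊z⌋₊ | n ∈ V.smoothNumbers}.card : ℕ) : ℝ) ≤ W * m ^ 2 := by
    have hV0 : 2 ≤ Real.log V := by nlinarith
    refine (card_smoothNumbers_le_rankin hV0 (by linarith : 1 ≤ z) (fun n hn => ?_)).trans ?_
    · have hn' := Finset.mem_filter.mp hn
      exact ⟨hn'.2, (Nat.cast_le.mpr (Finset.mem_Icc.mp hn'.1).2).trans hX⟩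
    · refine le_trans ?_ hzl2
      rw [div_eq_mul_inv z, ← Real.exp_log (inv_pos.mpr hl0), Real.log_inv]
      refine mul_le_mul_of_nonneg_left (Real.exp_le_exp.mpr ?_) hz0.le
      have ha : s ^ 3 ≤ Real.log z / Real.log V := by
        rw [le_div_iff₀ (by linarith)]
        calc s ^ 3 * Real.log V ≤ s ^ 3 * s ^ 2 := by gcongr
          _ = l := by rw [← hs5]; ring
          _ ≤ _ := hlz
      have hb : 12 * (1 + s ^ 2) + 5 * s ≤ s ^ 3 := by nlinarith [mul_pos hs0 hs0]
      linarith
  have h4 : 1 ≤ W * m ^ 2 := by nlinarith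
  linarith

open Filter in
open Classical in
/-- For `y ≤ z ≤ y log log y` the unsieved integers are outnumbered by the primes in
`(y / 8, y] \ Z`. -/
theorem eventually_count (k : ℕ) {C : ℝ} (hC : 0 < C) :
    ∀ᶠ y : ℝ in atTop, ∀ z : ℝ, y ≤ z → z ≤ y * Real.log (Real.log y) → ∀ Z : Set ℕ,
      (∀ B : ℝ, 0 < B → ∀ F : Finset ℕ, (∀ p ∈ F, p ∈ Z ∧ B ≤ p) →
        ∑ p ∈ F, (1 : ℝ) / p ≤ C / B) →
      (∀ p ∈ Z, Real.log z / C ≤ p) →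
      (2 * (⌊z⌋₊ * ∑ p ∈ Finset.Icc 1 ⌊z⌋₊ with p ∈ Z, (1 : ℝ) / p +
        ⌊z⌋₊ / (y / 8) * ⌊z⌋₊.primeCounting +
        ({n ∈ Finset.Icc 1 ⌊z⌋₊ | n ∈ (smoothBound y).smoothNumbers}.card : ℕ)) + 1) *
        Real.exp (-∑ p ∈ (smoothBound y).primesBelow with ⌈Real.log y⌉₊ ≤ p ∧ p ∉ Z, (1 : ℝ) / p +
          k * (Real.log z / Real.log 2 / ⌈Real.log y⌉₊)) + k ≤
      ({p ∈ ⌊y⌋₊.primesLE | y / 8 < (p : ℕ) ∧ p ∉ Z}.card : ℕ) := by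
  set A : ℝ := (2 * C ^ 2 + 35) * Real.exp (5 + C ^ 2 + 4 * k) * 225 with hA
  have hA0 : 0 < A := by positivity
  have hsmall : ∀ᶠ y : ℝ in atTop, (Real.log (Real.log y) / 15) ^ 2 *
      Real.exp (-(Real.log (Real.log y) / 15)) ≤ 1 / (16 * A) :=
    ((Real.tendsto_pow_mul_exp_neg_atTop_nhds_zero 2).comp
      ((Real.tendsto_log_atTop.comp Real.tendsto_log_atTop).atTop_div_const
        (by norm_num : (0 : ℝ) < 15))).eventually_le_const (by positivity)
  have hbig : ∀ᶠ y : ℝ in atTop, Real.log y ≤ 1 / (16 * (k + 8 * C)) * y := by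
    filter_upwards [Real.isLittleO_log_id_atTop.bound
      (by positivity : (0 : ℝ) < 1 / (16 * (k + 8 * C))), eventually_ge_atTop 1] with y hy hy1
    rw [Real.norm_of_nonneg (Real.log_nonneg hy1), id, Real.norm_of_nonneg (by linarith)] at hy
    exact hy
  filter_upwards [eventually_card_large_primes_ge hC, eventually_exp_neg_sum_le k hC,
    eventually_unsieved_bound_le hC, hsmall, hbig, eventually_ge_atTop 1,
    Real.tendsto_log_atTop.eventually_ge_atTop 1] with
    y hlarge hexp huns hsm hb hy hL z hyz hzy Z hZ hZmin
  have hlz : 0 < Real.log z := by linarith [Real.log_le_log (by linarith) hyz]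
  have hZ' : ∀ F : Finset ℕ, (∀ p ∈ F, p ∈ Z) → ∑ p ∈ F, (1 : ℝ) / p ≤ C ^ 2 / Real.log z := by
    intro F hF
    refine (hZ (Real.log z / C) (by positivity) F fun p hp => ⟨hF p hp, hZmin p (hF p hp)⟩).trans
      (le_of_eq ?_)
    field_simp
  have h1 := hexp z hyz hzy Z hZ'
  have h2 := huns z hyz hzy Z hZ'
  have h3 := hlarge Z hZ {p ∈ ⌊y⌋₊.primesLE | y / 8 < (p : ℕ) ∧ p ∉ Z} fun p hp h8 hpy hpZ =>
    Finset.mem_filter.mpr ⟨Nat.mem_primesLE.mpr ⟨Nat.le_floor hpy, hp⟩, h8, hpZ⟩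
  have hl0 : 0 < Real.log y := by linarith
  have hW0 : 0 < y / Real.log y := by positivity
  have h4 : (k : ℝ) + 8 * C ≤ 1 / 16 * (y / Real.log y) := by
    rw [one_div_mul_eq_div, le_div_iff₀ (by positivity)] at hb
    rw [one_div_mul_eq_div, div_div, le_div_iff₀ (by positivity)]
    linarith
  have h5 := mul_le_mul h2 h1 (Real.exp_pos _).le (by positivity)
  have h6 : (2 * C ^ 2 + 35) * (y / Real.log y * Real.log (Real.log y) ^ 2) *
      (Real.exp (5 + C ^ 2 + 4 * k) * Real.exp (-(Real.log (Real.log y) / 15))) ≤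
      1 / 16 * (y / Real.log y) := by
    calc _ = A * (y / Real.log y) * ((Real.log (Real.log y) / 15) ^ 2 *
          Real.exp (-(Real.log (Real.log y) / 15))) := by rw [hA]; ring
      _ ≤ A * (y / Real.log y) * (1 / (16 * A)) := by gcongr
      _ = _ := by field_simp
  linarith

/-- A set avoiding some residue class modulo every prime is admissible. -/
theorem admissibleSet_of_forall_not_dvd {H : Finset ℤ}
    (hH : ∀ p : ℕ, p.Prime → ∃ a : ℤ, ∀ g ∈ H, ¬ (p : ℤ) ∣ g - a) : AdmissibleSet H := by
  intro p hp
  have : Fact p.Prime := ⟨hp⟩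
  obtain ⟨a, ha⟩ := hH p hp
  have hne : {n : ZMod p | ∏ h ∈ H, (n + (h : ZMod p)) = 0} ≠ Set.univ := by
    intro huniv
    have hmem : ((-a : ℤ) : ZMod p) ∈ {n : ZMod p | ∏ h ∈ H, (n + (h : ZMod p)) = 0} := by
      rw [huniv]
      exact Set.mem_univ _
    obtain ⟨g, hg, hg0⟩ := Finset.prod_eq_zero_iff.mp hmem
    refine ha g hg ((ZMod.intCast_zmod_eq_zero_iff_dvd _ p).mp ?_)
    rw [← hg0]
    push_cast
    ring
  have := Set.ncard_lt_card hne
  rwa [Nat.card_zmod] at this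

/-- A translate of the `d i` by a multiple of `q` avoids a class modulo each prime, namely the
class of zero for primes dividing `q`. -/
theorem exists_avoided_class {k q : ℕ} {r d h : Fin k → ℤ} {c : ℤ}
    (hrcop : ∀ i, IsCoprime (r i) (q : ℤ)) (hcq : (q : ℤ) ∣ c) (hh : ∀ i, h i = c + d i)
    (hdr : ∀ i, d i ≡ r i [ZMOD q])
    (hdk : ∀ p : ℕ, p.Prime → p ≤ k → ¬ p ∣ q → ∀ i, (p : ℤ) ∣ d i) {p : ℕ} (hp : p.Prime) :
    ∃ a : ℤ, (p ∣ q → a = 0) ∧ ∀ i, ¬ (p : ℤ) ∣ h i - a := by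
  have hp1 : ¬ (p : ℤ) ∣ 1 := fun hd => hp.not_dvd_one (by exact_mod_cast hd)
  by_cases hpq : p ∣ q
  · refine ⟨0, fun _ => rfl, fun i hd => hp1 ?_⟩
    have hpq' : (p : ℤ) ∣ q := Int.natCast_dvd_natCast.mpr hpq
    rw [sub_zero, hh, dvd_add_right (hpq'.trans hcq)] at hd
    have h1 : (p : ℤ) ∣ r i - d i := hpq'.trans (hdr i).dvd
    have h2 : (p : ℤ) ∣ r i := by
      have := dvd_add h1 hd
      rwa [sub_add_cancel] at this
    exact ((hrcop i).isUnit_of_dvd' h2 hpq').dvd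
  by_cases hpk : p ≤ k
  · refine ⟨c + 1, fun h => absurd h hpq, fun i hd => hp1 ?_⟩
    have h1 := dvd_sub (hdk p hp hpk hpq i) hd
    rwa [hh, show d i - (c + d i - (c + 1)) = 1 by ring] at h1
  · obtain ⟨a, ha⟩ := exists_forall_not_dvd_sub (not_le.mp hpk) h
    exact ⟨a, fun h => absurd h hpq, ha⟩

open Filter in
theorem eventually_sieve_parameters (k D : ℕ) :
    ∀ᶠ y : ℝ in atTop, k < ⌈Real.log y⌉₊ ∧ D < ⌈Real.log y⌉₊ ∧ D < smoothBound y ∧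
      (smoothBound y : ℝ) ≤ y / 8 ∧ 1 < y / 8 ∧ ∀ z, z ≤ y * Real.log (Real.log y) →
        z < (y / 8) ^ 2 := by
  have hlo : ∀ᶠ y : ℝ in atTop, Real.log y ≤ 1 / 100 * y := by
    filter_upwards [Real.isLittleO_log_id_atTop.bound (by norm_num : (0 : ℝ) < 1 / 100),
      eventually_ge_atTop 1] with y hy hy1
    rw [Real.norm_of_nonneg (Real.log_nonneg hy1), id, Real.norm_of_nonneg (by linarith)] at hy
    exact hy
  filter_upwards [hlo, Real.tendsto_log_atTop.eventually_ge_atTop ((k : ℝ) + D + 1),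
    tendsto_log_rpow_atTop.eventually_ge_atTop ((D : ℝ) + 3), eventually_ge_atTop 9] with
    y hlog hL hs hy
  have hD0 : (0 : ℝ) ≤ D := Nat.cast_nonneg D
  have hk0 : (0 : ℝ) ≤ k := Nat.cast_nonneg k
  obtain ⟨hV1, hV2⟩ := log_smoothBound_mem (by linarith : 2 ≤ Real.log y ^ (1 / 5 : ℝ))
  have hl0 : 0 < Real.log y := by linarith
  have hy0 : 0 < y := by linarith
  have hs5 := rpow_one_div_five_pow hl0.le
  set s := Real.log y ^ (1 / 5 : ℝ) with hsdef
  have hVpos : (0 : ℝ) < smoothBound y := by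
    rcases Nat.eq_zero_or_pos (smoothBound y) with h | h
    · rw [h] at hV1
      simp only [Nat.cast_zero, Real.log_zero] at hV1
      nlinarith
    · exact_mod_cast h
  refine ⟨?_, ?_, ?_, ?_, by linarith, fun z hz => ?_⟩
  · exact Nat.lt_ceil.mpr (by linarith)
  · exact Nat.lt_ceil.mpr (by linarith)
  · have h1 := Real.log_le_sub_one_of_pos hVpos
    have : (D : ℝ) < smoothBound y := by nlinarith
    exact_mod_cast this
  · rw [← Real.log_le_log_iff hVpos (by positivity), Real.log_div hy0.ne' (by norm_num)]
    have hlog8 : Real.log 8 ≤ 3 := by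
      rw [show (8 : ℝ) = 2 ^ 3 by norm_num, Real.log_pow]
      push_cast
      linarith [Real.log_two_lt_d9]
    have h1 : s ^ 2 + 3 ≤ s ^ 5 := by
      have hs3 : 3 ≤ s := by linarith
      have h2 : 27 ≤ s ^ 3 := by
        calc (27 : ℝ) = 3 ^ 3 := by norm_num
          _ ≤ s ^ 3 := by gcongr
      nlinarith [sq_nonneg s]
    linarith
  · have h1 : Real.log (Real.log y) ≤ Real.log y :=
      (Real.log_le_sub_one_of_pos hl0).trans (by linarith)
    calc z ≤ y * (1 / 100 * y) := hz.trans (mul_le_mul_of_nonneg_left (h1.trans hlog) hy0.le)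
      _ < (y / 8) ^ 2 := by nlinarith

open Filter in
theorem eventually_exists_classes (k : ℕ) (q : ℕ) (hq : 0 < q)
    (r : Fin k → ℤ) (hrpos : ∀ i, 0 < r i) (hrmono : Monotone r)
    (hrcop : ∀ i, IsCoprime (r i) (q : ℤ)) (C : ℝ) (hC : 0 < C) (δ : ℝ) (hδ : 0 < δ) :
    ∀ᶠ y : ℝ in atTop, ∀ z : ℝ, (1 + δ) * y ≤ z → z ≤ y * Real.log (Real.log y) →
      ∀ Z : Set ℕ,
        (∀ p' ∈ Z,
          Summable (fun p : {p : ℕ // p ∈ Z ∧ p' ≤ p} => (1 : ℝ) / (p.1 : ℝ)) ∧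
          (∑' p : {p : ℕ // p ∈ Z ∧ p' ≤ p}, (1 : ℝ) / (p.1 : ℝ)) ≤ C / (p' : ℝ) ∧
          Real.log z / C ≤ (p' : ℝ)) →
      ∃ (a : ℕ → ℤ) (h : Fin k → ℤ), StrictMono h ∧
        (∀ i, y < (h i : ℝ) ∧ (h i : ℝ) ≤ z) ∧
        (∀ p : ℕ, p.Prime → ∀ i, ¬ (p : ℤ) ∣ h i - a p) ∧
        (∀ g : ℤ, 0 < g → (g : ℝ) ≤ z → (∀ i, g ≠ h i) →
          ∃ p : ℕ, p.Prime ∧ (p : ℝ) ≤ y ∧ p ∉ Z ∧ (p : ℤ) ∣ g - a p) ∧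
        (∀ p : ℕ, Nat.Prime p → p ∣ q → a p = 0) ∧
        (∀ i j, |((h i - h j : ℤ) : ℝ)| ≤ y) ∧
        (∀ i, h i ≡ r i [ZMOD (q : ℤ)]) := by
  obtain ⟨d, hdmono, hdpos, hdr, hdk⟩ := exists_strictMono_modEq hq r hrpos hrmono
  obtain ⟨D, hD⟩ : ∃ D : ℕ, ∀ i, d i ≤ D :=
    ⟨∑ i, (d i).toNat, fun i => (Int.self_le_toNat _).trans (by
      exact_mod_cast Finset.single_le_sum (f := fun i => (d i).toNat) (fun _ _ => Nat.zero_le _)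
        (Finset.mem_univ i))⟩
  filter_upwards [eventually_count k hC, eventually_sieve_parameters k (D + q),
    eventually_ge_atTop ((D + q) / δ), eventually_ge_atTop ((D : ℝ) + 1)] with
    y hcount ⟨hk, hDl, hDV, hVw, hw1, hzw⟩ hyδ hyD z hz hzy Z hZ
  have hy0 : 0 < y := by linarith
  have hq' : (0 : ℝ) < q := by exact_mod_cast hq
  have hyz : y ≤ z := by nlinarith
  rw [div_le_iff₀ hδ] at hyδ
  set c : ℤ := q * (⌊y / q⌋ + 1) with hc
  have hc1 : y < c := by
    rw [hc]
    push_cast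
    have := Int.lt_floor_add_one (y / q)
    rw [div_lt_iff₀ hq'] at this
    linarith
  have hc2 : (c : ℝ) ≤ y + q := by
    rw [hc]
    push_cast
    have := Int.floor_le (y / q)
    rw [le_div_iff₀ hq'] at this
    linarith
  have hcq : (q : ℤ) ∣ c := Dvd.intro _ rfl
  have hc0 : 0 < c := by exact_mod_cast hy0.trans hc1
  set h : Fin k → ℤ := fun i => c + d i with hh
  have hd1 : ∀ i, (0 : ℝ) < d i ∧ (d i : ℝ) ≤ D := fun i =>
    ⟨by exact_mod_cast hdpos i, by exact_mod_cast hD i⟩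
  have hhmem : ∀ i, y < (h i : ℝ) ∧ (h i : ℝ) ≤ z := fun i => by
    simp only [hh]
    push_cast
    have := hd1 i
    exact ⟨by linarith, by linarith⟩
  choose! e he0 he using fun (p : ℕ) (hp : p.Prime) =>
    exists_avoided_class hrcop hcq (h := h) (fun i => rfl) hdr hdk hp
  obtain ⟨a, ha1, ha2, ha3⟩ := exists_classes_covering (h := h) (y := y) (z := z) (w := y / 8)
    (c := c) (Z := Z) he
    (fun p hp hpV _ i hd => by
      simp only [hh, add_sub_cancel_left] at hd
      have := Int.le_of_dvd (hdpos i) hd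
      have := hD i
      omega)
    hk hVw hw1 (by linarith) (hzw z hzy)
    (fun i => ⟨by
      have := hdpos i
      simp only [hh]
      omega, (hhmem i).2⟩)
    ⟨hc0.le, by linarith⟩
    (hcount z hyz hzy Z
      (fun B hB F hF => sum_inv_le_of_tail hC (fun p hp => ⟨(hZ p hp).1, (hZ p hp).2.1⟩) hB F hF)
      (fun p hp => (hZ p hp).2.2))
  refine ⟨a, h, fun i j hij => add_lt_add_right (hdmono hij) c, hhmem, ha2, ha3,
    fun p hp hpq => ?_, fun i j => ?_, fun i => ?_⟩
  · have := Nat.le_of_dvd hq hpq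
    rw [ha1 p (by omega) (by omega), he0 p hp hpq]
  · have hi := hd1 i
    have hj := hd1 j
    simp only [hh]
    push_cast
    exact abs_le.mpr ⟨by linarith, by linarith⟩
  · have := (Int.modEq_zero_iff_dvd.mpr hcq).add (hdr i)
    simpa [hh] using this

theorem stmt12 (k : ℕ) (hk : 0 < k) (q : ℕ) (hq : 0 < q) (hsq : Squarefree q)
    (r : Fin k → ℤ) (hrpos : ∀ i, 0 < r i) (hrmono : Monotone r)
    (hrcop : ∀ i, IsCoprime (r i) (q : ℤ)) (C : ℝ) (hC : 0 < C) (δ : ℝ) (hδ : 0 < δ) :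
    ∃ y' : ℝ, ∀ x y z : ℝ, 1 ≤ x → y' ≤ y →
      (1 + δ) * y ≤ z →
      2 * y * (1 + (1 + (r ⟨k - 1, by omega⟩ : ℝ)) * x) ≤ 2 * (q : ℝ) / (q.totient : ℝ) * z →
      2 * (q : ℝ) / (q.totient : ℝ) * z ≤
        y * Real.log (Real.log y) / Real.log (Real.log (Real.log y)) →
      ∀ 𝒵 : Set ℕ, (∀ p ∈ 𝒵, Nat.Prime p) →
        (∀ p' ∈ 𝒵,
          Summable (fun p : {p : ℕ // p ∈ 𝒵 ∧ p' ≤ p} => (1 : ℝ) / (p.1 : ℝ)) ∧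
          (∑' p : {p : ℕ // p ∈ 𝒵 ∧ p' ≤ p}, (1 : ℝ) / (p.1 : ℝ)) ≤ C / (p' : ℝ) ∧
          Real.log z / C ≤ (p' : ℝ)) →
      ∃ (a : ℕ → ℤ) (h : Fin k → ℤ),
        Function.Injective h ∧
        AdmissibleSet (Finset.image h Finset.univ) ∧
        (∀ i, y < (h i : ℝ) ∧ (h i : ℝ) ≤ z) ∧
        (Set.range h =
          {g : ℤ | 0 < (g : ℝ) ∧ (g : ℝ) ≤ z} \
            ⋃ p ∈ {p : ℕ | Nat.Prime p ∧ (p : ℝ) ≤ y ∧ p ∉ 𝒵},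
              {g : ℤ | g ≡ a p [ZMOD (p : ℤ)]}) ∧
        (∀ p : ℕ, Nat.Prime p → p ∣ q → (p : ℤ) ∣ a p) ∧
        (∀ i j, i < j → ∀ p : ℕ, Nat.Prime p → (p : ℤ) ∣ h i - h j → (p : ℝ) ≤ y) ∧
        (∀ i, h i ≡ r i [ZMOD (q : ℤ)]) := by

  have hev := (eventually_exists_classes k q hq r hrpos hrmono hrcop C hC δ hδ).and
    ((Filter.eventually_ge_atTop 1).and
      (((Real.tendsto_log_atTop.comp Real.tendsto_log_atTop).eventually_ge_atTop 0).and <|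
        (Real.tendsto_log_atTop.comp
        (Real.tendsto_log_atTop.comp Real.tendsto_log_atTop)).eventually_ge_atTop 1))
  obtain ⟨y', hy'⟩ := Filter.eventually_atTop.mp hev
  refine ⟨y', fun x y z _ hy hyz _ hzy 𝒵 _ h𝒵 => ?_⟩
  obtain ⟨hmain, hy1, hll, hlll⟩ := hy' y hy
  simp only [Function.comp] at hll hlll
  have hy0 : 0 < y := by linarith
  have hz0 : 0 < z := lt_of_lt_of_le (by positivity) hyz
  have hzy' : z ≤ y * Real.log (Real.log y) := by
    have h1 : z ≤ 2 * (q : ℝ) / (q.totient : ℝ) * z := by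
      refine le_mul_of_one_le_left hz0.le ?_
      have ht : (0 : ℝ) < q.totient := by exact_mod_cast Nat.totient_pos.mpr hq
      rw [one_le_div ht]
      have : (q.totient : ℝ) ≤ q := by exact_mod_cast Nat.totient_le q
      linarith
    exact h1.trans (hzy.trans (div_le_self (by positivity) hlll))
  obtain ⟨a, h, hmono, hmem, havoid, hcover, haq, hdiff, hr⟩ := hmain z hyz hzy' 𝒵 h𝒵
  refine ⟨a, h, hmono.injective, ?_, hmem, ?_, fun p hp hpq => ?_, fun i j hij p hp hd => ?_, hr⟩
  · refine admissibleSet_of_forall_not_dvd fun p hp => ⟨a p, fun g hg => ?_⟩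
    obtain ⟨i, -, rfl⟩ := Finset.mem_image.mp hg
    exact havoid p hp i
  · ext g
    simp only [Set.mem_range, Set.mem_sdiff, Set.mem_ofPred_eq, Set.mem_iUnion, not_exists,
      exists_prop, not_and]
    constructor
    · rintro ⟨i, rfl⟩
      exact ⟨⟨hy0.trans (hmem i).1, (hmem i).2⟩, fun p hp hmod => havoid p hp.1 i hmod.symm.dvd⟩
    · rintro ⟨⟨hg0, hgz⟩, hg⟩
      by_contra hne
      push Not at hne
      obtain ⟨p, hp, hpy, hpZ, hd⟩ :=
        hcover g (by exact_mod_cast hg0) hgz fun i hi => hne i hi.symm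
      exact hg p ⟨hp, hpy, hpZ⟩ (Int.modEq_iff_dvd.mpr hd).symm
  · rw [haq p hp hpq]
    exact dvd_zero _
  · have hne : h i - h j ≠ 0 := sub_ne_zero.mpr (hmono hij).ne
    have h1 : (p : ℤ) ≤ |h i - h j| := Int.le_of_dvd (abs_pos.mpr hne) ((dvd_abs _ _).mpr hd)
    have h2 : (p : ℝ) ≤ |((h i - h j : ℤ) : ℝ)| := by exact_mod_cast h1
    exact h2.trans (hdiff i j)
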